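/- arXiv:1206.0895 — 3 statements merged into one kernel-verified Lean document; each statement's English description precedes it below -/
import Mathlib

section
/- Let m be a (local or global) minimum of G of type k and strength λ, and fix α with 1 − 1/(2(2k−1)) < α < 1. Suppose that for μ-almost every realization h the sequence of laws of (S_n − n m)/n^α + W/n^{α−1/2} under P_{n,β}^h ⊗ N(0, β^{−1}) satisfies a moderate deviations principle with speed n^{1−2k(1−α)} and rate function J(x) = λ x^{2k}/(2k)!. Then for μ-almost every realization h the sequence of laws of (S_n − n m)/n^α under P_{n,β}^h satisfies a moderate deviations principle with speed n^{1−2k(1−α)} and rate function I(x) = x²/(2σ²) with σ² = λ^{−1} − β^{−1} if k = 1, and I(x) = λ x^{2k}/(2k)! if k ≥ 2. -/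
open MeasureTheory ProbabilityTheory Real Filter Topology
open scoped ENNReal NNReal

noncomputable section

/-- The value of a spin encoded as a Boolean. -/
def spin (b : Bool) : ℝ := if b then 1 else -1

/-- Total magnetization of a configuration. -/
def mag {n : ℕ} (σ : Fin n → Bool) : ℝ := ∑ i, spin (σ i)

/-- Gibbs weight of a configuration in the random field Curie-Weiss model. -/
def gibbsWeight (β : ℝ) (h : ℕ → ℝ) (n : ℕ) (σ : Fin n → Bool) : ℝ :=
  Real.exp (β / (2 * n) * (mag σ) ^ 2 + β * ∑ i : Fin n, h i * spin (σ i))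

/-- The random field Curie-Weiss Gibbs measure on configurations. -/
def gibbsMeasure (β : ℝ) (h : ℕ → ℝ) (n : ℕ) : Measure (Fin n → Bool) :=
  (ENNReal.ofReal (∑ σ : Fin n → Bool, gibbsWeight β h n σ))⁻¹ •
    ∑ σ : Fin n → Bool, ENNReal.ofReal (gibbsWeight β h n σ) • Measure.dirac σ

/-- `μ` is the infinite product of `ν` over `ℕ` (characterised by finite marginals). -/
def IsProductMeasure (ν : Measure ℝ) (μ : Measure (ℕ → ℝ)) : Prop :=
  ∀ n : ℕ, μ.map (fun h (i : Fin n) => h (i : ℕ)) = Measure.pi fun _ : Fin n => ν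

/-- extended logarithm, `elog 0 = ⊥`, `elog ⊤ = ⊤`. -/
def elog (x : ℝ≥0∞) : EReal :=
  if x = 0 then ⊥ else if x = ⊤ then ⊤ else ((Real.log x.toReal : ℝ) : EReal)

/-- A sequence of measures satisfies a large deviations principle with given speed and
rate function. -/
def HasLDP (P : ℕ → Measure ℝ) (speed : ℕ → ℝ) (I : ℝ → ℝ≥0∞) : Prop :=
  LowerSemicontinuous I ∧ (∀ c : ℝ, IsCompact {x : ℝ | I x ≤ ENNReal.ofReal c}) ∧
    ∀ C : Set ℝ, MeasurableSet C →
      -(⨅ x ∈ interior C, (I x : EReal)) ≤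
          liminf (fun n => ((((speed n)⁻¹ : ℝ) : EReal)) * elog (P n C)) atTop ∧
        limsup (fun n => ((((speed n)⁻¹ : ℝ) : EReal)) * elog (P n C)) atTop ≤
          -(⨅ x ∈ closure C, (I x : EReal))

/-- The function `G` of the random field Curie-Weiss model. -/
def G (β : ℝ) (ν : Measure ℝ) (x : ℝ) : ℝ :=
  β / 2 * x ^ 2 - ∫ h, Real.log (Real.cosh (β * (x + h))) ∂ν

/-- The finite-volume function `G_n^h`. -/
def Gn (β : ℝ) (h : ℕ → ℝ) (n : ℕ) (x : ℝ) : ℝ :=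
  β / 2 * x ^ 2 - (1 / n) * ∑ i : Fin n, Real.log (Real.cosh (β * (x + h i)))

/-- `m` is a (local or global) minimum of `G` of type `k` and strength `l`. -/
def IsMinOfType (β : ℝ) (ν : Measure ℝ) (m : ℝ) (k : ℕ) (l : ℝ) : Prop :=
  1 ≤ k ∧ 0 < l ∧ (∀ i : ℕ, 1 ≤ i → i ≤ 2 * k - 1 → iteratedDeriv i (G β ν) m = 0) ∧
    iteratedDeriv (2 * k) (G β ν) m = l

/-- The height of a minimum `m` of `G`. -/
def height (β : ℝ) (ν : Measure ℝ) (m : ℝ) : ℝ := G β ν m - ⨅ w, G β ν w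

/-- The broadness of a minimum `m` of `G`. -/
def broadness (β : ℝ) (ν : Measure ℝ) (m : ℝ) : ℝ :=
  sInf ((fun y => |y - m|) '' {y | G β ν y < G β ν m})

/-- The moderate deviations rate function. -/
def mdpRate (β l : ℝ) (k : ℕ) (x : ℝ) : ℝ≥0∞ :=
  if k = 1 then ENNReal.ofReal (x ^ 2 / (2 * (l⁻¹ - β⁻¹)))
  else ENNReal.ofReal (l * x ^ (2 * k) / (Nat.factorial (2 * k)))

/-- The polynomial `P_{2k}`. -/
def P2k (l : ℝ) (k : ℕ) (s : ℝ) : ℝ :=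
  l / (2 * (Nat.factorial (2 * k))) * s ^ (2 * k) - ∑ i ∈ Finset.Icc 1 (2 * k - 1), |s| ^ i


theorem elog_h1 {s c : ℝ} (hs : 0 < s) {p : ℝ≥0∞} (hp : p ≠ ⊤)
    (h : (c : EReal) < ((s⁻¹ : ℝ) : EReal) * elog p) : Real.exp (s * c) ≤ p.toReal := by
  unfold elog at h
  split_ifs at h with h0
  · rw [EReal.coe_mul_bot_of_pos (inv_pos.2 hs)] at h
    exact absurd h not_lt_bot
  · have h' : c < s⁻¹ * Real.log p.toReal := by exact_mod_cast h
    rw [← Real.le_log_iff_exp_le (ENNReal.toReal_pos h0 hp)]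
    rw [inv_mul_eq_div, lt_div_iff₀ hs] at h'
    linarith

theorem elog_h2 {s c : ℝ} (hs : 0 < s) {p : ℝ≥0∞} (hp : p ≠ ⊤)
    (h : ((s⁻¹ : ℝ) : EReal) * elog p < (c : EReal)) : p.toReal ≤ Real.exp (s * c) := by
  unfold elog at h
  split_ifs at h with h0
  · simp [h0, Real.exp_nonneg]
  · have h' : s⁻¹ * Real.log p.toReal < c := by exact_mod_cast h
    rw [← Real.log_le_iff_le_exp (ENNReal.toReal_pos h0 hp)]
    rw [inv_mul_eq_div, div_lt_iff₀ hs] at h'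
    linarith

theorem elog_h3 {s c : ℝ} (hs : 0 < s) {p : ℝ≥0∞} (hp : p ≠ ⊤)
    (h : Real.exp (s * c) ≤ p.toReal) : (c : EReal) ≤ ((s⁻¹ : ℝ) : EReal) * elog p := by
  have h0 : p ≠ 0 := by
    rintro rfl
    simp at h
    exact absurd h (not_le.2 (Real.exp_pos _))
  unfold elog
  rw [if_neg h0, if_neg hp]
  have : c ≤ s⁻¹ * Real.log p.toReal := by
    rw [← Real.le_log_iff_exp_le (ENNReal.toReal_pos h0 hp)] at h
    rw [inv_mul_eq_div, le_div_iff₀ hs]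
    linarith
  exact_mod_cast this

theorem elog_h4 {s c : ℝ} (hs : 0 < s) {p : ℝ≥0∞} (hp : p ≠ ⊤)
    (h : p.toReal ≤ Real.exp (s * c)) : ((s⁻¹ : ℝ) : EReal) * elog p ≤ (c : EReal) := by
  unfold elog
  split_ifs with h0
  · rw [EReal.coe_mul_bot_of_pos (inv_pos.2 hs)]
    exact bot_le
  · have : s⁻¹ * Real.log p.toReal ≤ c := by
      rw [← Real.log_le_iff_le_exp (ENNReal.toReal_pos h0 hp)] at h
      rw [inv_mul_eq_div, div_le_iff₀ hs]
      linarith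
    exact_mod_cast this

/-- A constant multiple is absorbed by a strictly better exponential rate. -/
theorem absorb {s : ℕ → ℝ} (hs : Tendsto s atTop atTop) (N : ℝ) {c c' : ℝ} (h : c < c') :
    ∀ᶠ n in atTop, N * Real.exp (-(s n * c')) ≤ Real.exp (-(s n * c)) := by
  have h1 : Tendsto (fun n => Real.exp (s n * (c' - c))) atTop atTop :=
    Real.tendsto_exp_atTop.comp (hs.atTop_mul_const (sub_pos.2 h))
  filter_upwards [h1.eventually_ge_atTop N] with n hn
  have : Real.exp (-(s n * c)) = Real.exp (s n * (c' - c)) * Real.exp (-(s n * c')) := by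
    rw [← Real.exp_add]; ring_nf
  rw [this]
  exact mul_le_mul_of_nonneg_right hn (Real.exp_nonneg _)

theorem ldp_lower {P : ℕ → Measure ℝ} [∀ n, IsProbabilityMeasure (P n)] {s : ℕ → ℝ}
    (hs : Tendsto s atTop atTop) {j : ℝ → ℝ} (hj : ∀ x, 0 ≤ j x)
    (H : HasLDP P s (fun x => ENNReal.ofReal (j x))) (y η : ℝ) (hη : 0 < η) (c : ℝ) (hc : j y < c) :
    ∀ᶠ n in atTop, Real.exp (-(s n * c)) ≤ (P n).real (Metric.ball y η) := by
  have h1 := (H.2.2 (Metric.ball y η) Metric.isOpen_ball.measurableSet).1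
  rw [Metric.isOpen_ball.interior_eq] at h1
  have h2 : (⨅ x ∈ Metric.ball y η, ((ENNReal.ofReal (j x) : ℝ≥0∞) : EReal)) ≤ (j y : EReal) := by
    refine (iInf₂_le y (Metric.mem_ball_self hη)).trans ?_
    rw [EReal.coe_ennreal_ofReal, max_eq_left (hj y)]
  have h3 : ((-c : ℝ) : EReal) < liminf (fun n => ((((s n)⁻¹ : ℝ) : EReal)) *
      elog (P n (Metric.ball y η))) atTop := by
    refine lt_of_lt_of_le ?_ ((EReal.neg_le_neg_iff.2 h2).trans h1)
    rw [← EReal.coe_neg, EReal.coe_lt_coe_iff]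
    linarith
  filter_upwards [eventually_lt_of_lt_liminf h3, hs.eventually_gt_atTop 0] with n hn hsn
  have := elog_h1 hsn (measure_ne_top _ _) hn
  rwa [mul_neg] at this

theorem ldp_upper {P : ℕ → Measure ℝ} [∀ n, IsProbabilityMeasure (P n)] {s : ℕ → ℝ}
    (hs : Tendsto s atTop atTop) {j : ℝ → ℝ}
    (H : HasLDP P s (fun x => ENNReal.ofReal (j x))) (C : Set ℝ) (hC : IsClosed C) (c c' : ℝ)
    (hc : c < c') (hj : ∀ x ∈ C, c' ≤ j x) :
    ∀ᶠ n in atTop, (P n).real C ≤ Real.exp (-(s n * c)) := by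
  have h1 := (H.2.2 C hC.measurableSet).2
  rw [hC.closure_eq] at h1
  have h2 : (c' : EReal) ≤ (⨅ x ∈ C, ((ENNReal.ofReal (j x) : ℝ≥0∞) : EReal)) := by
    refine le_iInf₂ fun x hx => ?_
    rw [EReal.coe_ennreal_ofReal]
    exact_mod_cast (hj x hx).trans (le_max_left _ _)
  have h3 : limsup (fun n => ((((s n)⁻¹ : ℝ) : EReal)) * elog (P n C)) atTop <
      ((-c : ℝ) : EReal) := by
    refine lt_of_le_of_lt (h1.trans (EReal.neg_le_neg_iff.2 h2)) ?_
    rw [← EReal.coe_neg, EReal.coe_lt_coe_iff]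
    linarith
  filter_upwards [eventually_lt_of_limsup_lt h3, hs.eventually_gt_atTop 0] with n hn hsn
  have := elog_h2 hsn (measure_ne_top _ _) hn
  rwa [mul_neg] at this

/-- Finite covering argument. -/
theorem compact_cover {M : ℕ → Measure ℝ} [∀ n, IsFiniteMeasure (M n)] {s : ℕ → ℝ}
    {K : Set ℝ} (hK : IsCompact K) {c : ℝ}
    (h : ∀ x ∈ K, ∃ δ > 0, ∀ᶠ n in atTop, (M n).real (Metric.ball x δ) ≤ Real.exp (-(s n * c))) :
    ∃ N : ℝ, ∀ᶠ n in atTop, (M n).real K ≤ N * Real.exp (-(s n * c)) := by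
  refine hK.induction_on (p := fun S => ∃ N : ℝ, ∀ᶠ n in atTop,
    (M n).real S ≤ N * Real.exp (-(s n * c))) ?_ ?_ ?_ ?_
  · exact ⟨0, by simp⟩
  · rintro S T hST ⟨N, hN⟩
    exact ⟨N, hN.mono fun n hn => (measureReal_mono hST).trans hn⟩
  · rintro S T ⟨N, hN⟩ ⟨N', hN'⟩
    refine ⟨N + N', ?_⟩
    filter_upwards [hN, hN'] with n h1 h2
    refine (measureReal_union_le _ _).trans ?_
    linarith
  · intro x hx
    obtain ⟨δ, hδ, h⟩ := h x hx
    exact ⟨Metric.ball x δ, mem_nhdsWithin_of_mem_nhds (Metric.ball_mem_nhds x hδ), 1,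
      by simpa using h⟩

/-- Local estimates plus exponential tightness give the full principle. -/
theorem ldp_of_local {P : ℕ → Measure ℝ} [∀ n, IsProbabilityMeasure (P n)] {s : ℕ → ℝ}
    (hs : Tendsto s atTop atTop) {j : ℝ → ℝ} (hj : ∀ x, 0 ≤ j x) (hcont : Continuous j)
    (hbdd : ∀ c : ℝ, ∃ K : ℝ, ∀ x, j x ≤ c → |x| ≤ K)
    (hL : ∀ y η : ℝ, 0 < η → ∀ c, j y < c →
      ∀ᶠ n in atTop, Real.exp (-(s n * c)) ≤ (P n).real (Metric.ball y η))
    (hU : ∀ x c : ℝ, c < j x → ∃ δ > 0, ∀ᶠ n in atTop,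
      (P n).real (Metric.ball x δ) ≤ Real.exp (-(s n * c)))
    (hT : ∀ c : ℝ, ∃ K : ℝ, ∀ᶠ n in atTop,
      (P n).real (Metric.closedBall 0 K)ᶜ ≤ Real.exp (-(s n * c))) :
    HasLDP P s (fun x => ENNReal.ofReal (j x)) := by
  have hIc : Continuous (fun x => ENNReal.ofReal (j x)) := ENNReal.continuous_ofReal.comp hcont
  refine ⟨hIc.lowerSemicontinuous, fun c => ?_, fun C hC => ⟨?_, ?_⟩⟩
  · obtain ⟨K, hK⟩ := hbdd (max c 0)
    refine (isCompact_closedBall (0 : ℝ) K).of_isClosed_subset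
      (isClosed_le hIc continuous_const) fun x hx => ?_
    rw [Metric.mem_closedBall, dist_zero_right, Real.norm_eq_abs]
    refine hK x ?_
    have hx' : ENNReal.ofReal (j x) ≤ ENNReal.ofReal c := hx
    by_contra hlt
    push Not at hlt
    have h0 : 0 < j x := lt_of_le_of_lt (le_max_right _ _) hlt
    have := (ENNReal.ofReal_lt_ofReal_iff h0).2 (lt_of_le_of_lt (le_max_left c 0) hlt)
    exact absurd hx' (not_le.2 this)
  · rw [EReal.neg_le]
    refine le_iInf₂ fun x hx => ?_
    rw [EReal.neg_le]
    obtain ⟨η, hη, hb⟩ := Metric.isOpen_iff.1 isOpen_interior x hx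
    rw [EReal.coe_ennreal_ofReal, max_eq_left (hj x), ← EReal.coe_neg]
    refine le_of_forall_lt fun a ha => ?_
    obtain ⟨b, hab, hb'⟩ := EReal.lt_iff_exists_real_btwn.1 ha
    refine lt_of_lt_of_le hab ?_
    have hb2 : j x < -b := by
      have : b < - j x := by exact_mod_cast hb'
      linarith
    refine le_liminf_of_le (by isBoundedDefault) ?_
    filter_upwards [hL x η hη _ hb2, hs.eventually_gt_atTop 0] with n hn hsn
    refine elog_h3 hsn (measure_ne_top _ _) ?_
    rw [mul_neg, neg_neg] at hn
    exact hn.trans (measureReal_mono (hb.trans interior_subset))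
  · rw [EReal.le_neg]
    refine le_of_forall_lt fun a ha => ?_
    obtain ⟨c, hac, hc⟩ := EReal.lt_iff_exists_real_btwn.1 ha
    obtain ⟨c', hcc', hc'⟩ := EReal.lt_iff_exists_real_btwn.1 hc
    refine lt_of_lt_of_le hac ?_
    rw [EReal.le_neg, ← EReal.coe_neg]
    have hcc'' : c < c' := by exact_mod_cast hcc'
    refine limsup_le_of_le (by isBoundedDefault) ?_
    by_cases hc0 : c < 0
    · filter_upwards [hs.eventually_gt_atTop 0] with n hsn
      refine elog_h4 hsn (measure_ne_top _ _) ?_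
      refine (measureReal_le_one (μ := P n) (s := C)).trans ?_
      rw [Real.one_le_exp_iff]
      nlinarith
    push Not at hc0
    obtain ⟨K, hK⟩ := hT c'
    have hKc : IsCompact (closure C ∩ Metric.closedBall 0 K) :=
      (isCompact_closedBall (0 : ℝ) K).inter_left isClosed_closure
    obtain ⟨N, hN⟩ := compact_cover (M := P) (s := s) hKc (c := c') (fun x hx => by
      refine hU x c' ?_
      have h1 := lt_of_lt_of_le hc' (iInf₂_le x hx.1)
      rw [EReal.coe_ennreal_ofReal, max_eq_left (hj x)] at h1
      exact_mod_cast h1)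
    filter_upwards [hN, hK, absorb hs (N + 1) hcc'', hs.eventually_gt_atTop 0] with n h1 h2 h3 hsn
    refine elog_h4 hsn (measure_ne_top _ _) ?_
    have hsub : C ⊆ (closure C ∩ Metric.closedBall 0 K) ∪ (Metric.closedBall 0 K)ᶜ := by
      intro x hx
      by_cases hxK : x ∈ Metric.closedBall 0 K
      · exact Or.inl ⟨subset_closure hx, hxK⟩
      · exact Or.inr hxK
    have h4 : (P n).real C ≤ _ := (measureReal_mono hsub).trans (measureReal_union_le _ _)
    rw [mul_neg]
    change (P n).real C ≤ _
    linarith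
/-- Law of the sum of two independent variables. -/
def sumLaw (P Q : Measure ℝ) : Measure ℝ := (P.prod Q).map (fun p : ℝ × ℝ => p.1 + p.2)

theorem sumLaw_prob (P Q : Measure ℝ) [IsProbabilityMeasure P] [IsProbabilityMeasure Q] :
    IsProbabilityMeasure (sumLaw P Q) := by
  unfold sumLaw
  exact Measure.isProbabilityMeasure_map (by fun_prop)

theorem sumLaw_real (P Q : Measure ℝ) {C : Set ℝ} (hC : MeasurableSet C) :
    (sumLaw P Q).real C = (P.prod Q).real {p : ℝ × ℝ | p.1 + p.2 ∈ C} := by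
  unfold sumLaw
  rw [map_measureReal_apply (by fun_prop) hC]
  rfl

theorem sumLaw_ge (P Q : Measure ℝ) [IsProbabilityMeasure P] [IsProbabilityMeasure Q]
    {A B C : Set ℝ} (hC : MeasurableSet C) (h : ∀ a ∈ A, ∀ b ∈ B, a + b ∈ C) :
    P.real A * Q.real B ≤ (sumLaw P Q).real C := by
  rw [sumLaw_real P Q hC, ← measureReal_prod_prod]
  exact measureReal_mono (fun p hp => h _ hp.1 _ hp.2)

/-- Exponential tightness transfers to the first summand. -/
theorem tight_transfer {P Q : ℕ → Measure ℝ} [∀ n, IsProbabilityMeasure (P n)]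
    [∀ n, IsProbabilityMeasure (Q n)] {s : ℕ → ℝ}
    (hs : Tendsto s atTop atTop) {j : ℝ → ℝ}
    (hbdd : ∀ c : ℝ, ∃ K : ℝ, ∀ x, j x ≤ c → |x| ≤ K)
    (H : HasLDP (fun n => sumLaw (P n) (Q n)) s (fun x => ENNReal.ofReal (j x)))
    (hQ1 : ∀ δ > 0, ∀ᶠ n in atTop, 1 / 2 ≤ (Q n).real (Metric.ball 0 δ)) :
    ∀ c : ℝ, ∃ K : ℝ, ∀ᶠ n in atTop,
      (P n).real (Metric.closedBall 0 K)ᶜ ≤ Real.exp (-(s n * c)) := by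
  intro c
  have : ∀ n, IsProbabilityMeasure ((fun n => sumLaw (P n) (Q n)) n) := fun n => sumLaw_prob _ _
  obtain ⟨K, hK⟩ := hbdd (c + 2)
  refine ⟨K + 2, ?_⟩
  have hCc : IsClosed {y : ℝ | K + 1 ≤ |y|} := isClosed_le continuous_const continuous_abs
  have h1 := ldp_upper hs H {y : ℝ | K + 1 ≤ |y|} hCc (c + 1) (c + 2) (by linarith) (fun x hx => by
    by_contra hlt
    push Not at hlt
    have h1 := hK x hlt.le
    have h2 : K + 1 ≤ |x| := hx
    linarith)
  filter_upwards [h1, hQ1 1 one_pos, absorb hs 2 (show c < c + 1 by linarith)] with n h1 h2 h3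
  have h4 := sumLaw_ge (P n) (Q n) (A := (Metric.closedBall 0 (K + 2))ᶜ) (B := Metric.ball 0 1)
    hCc.measurableSet (by
      intro a ha b hb
      simp only [Set.mem_compl_iff, Metric.mem_closedBall, dist_zero_right, Real.norm_eq_abs,
        not_le] at ha
      simp only [Metric.mem_ball, dist_zero_right, Real.norm_eq_abs] at hb
      have := abs_sub_abs_le_abs_sub a (-b)
      rw [sub_neg_eq_add, abs_neg] at this
      change K + 1 ≤ |a + b|
      linarith)
  have h5 : (0 : ℝ) ≤ (P n).real (Metric.closedBall 0 (K + 2))ᶜ := measureReal_nonneg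
  nlinarith

/-- If the perturbation is superexponentially small, the principle transfers unchanged. -/
theorem transfer_negligible {P Q : ℕ → Measure ℝ} [∀ n, IsProbabilityMeasure (P n)]
    [∀ n, IsProbabilityMeasure (Q n)] {s : ℕ → ℝ}
    (hs : Tendsto s atTop atTop) {j : ℝ → ℝ} (hj : ∀ x, 0 ≤ j x) (hcont : Continuous j)
    (hbdd : ∀ c : ℝ, ∃ K : ℝ, ∀ x, j x ≤ c → |x| ≤ K)
    (H : HasLDP (fun n => sumLaw (P n) (Q n)) s (fun x => ENNReal.ofReal (j x)))
    (hQ1 : ∀ δ > 0, ∀ᶠ n in atTop, 1 / 2 ≤ (Q n).real (Metric.ball 0 δ))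
    (hQ : ∀ δ > 0, ∀ c : ℝ, ∀ᶠ n in atTop,
      (Q n).real (Metric.ball 0 δ)ᶜ ≤ Real.exp (-(s n * c))) :
    HasLDP P s (fun x => ENNReal.ofReal (j x)) := by
  have : ∀ n, IsProbabilityMeasure ((fun n => sumLaw (P n) (Q n)) n) := fun n => sumLaw_prob _ _
  refine ldp_of_local hs hj hcont hbdd ?_ ?_ (tight_transfer hs hbdd H hQ1)
  · intro y η hη c hc
    obtain ⟨c1, hc1, hc2⟩ := exists_between hc
    filter_upwards [ldp_lower hs hj H y (η / 2) (by positivity) c1 hc1,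
      hQ (η / 2) (by positivity) c, absorb hs 2 hc2] with n h1 h2 h3
    have h4 : (sumLaw (P n) (Q n)).real (Metric.ball y (η / 2)) ≤
        (P n).real (Metric.ball y η) + (Q n).real (Metric.ball 0 (η / 2))ᶜ := by
      rw [sumLaw_real _ _ Metric.isOpen_ball.measurableSet]
      have hsub : {p : ℝ × ℝ | p.1 + p.2 ∈ Metric.ball y (η / 2)} ⊆
          ((Metric.ball y η) ×ˢ Set.univ) ∪ (Set.univ ×ˢ (Metric.ball 0 (η / 2))ᶜ) := by
        rintro ⟨a, b⟩ hp
        by_cases hb : b ∈ Metric.ball (0 : ℝ) (η / 2)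
        · left
          refine ⟨?_, trivial⟩
          simp only [Set.mem_ofPred_eq, Metric.mem_ball, Real.dist_eq, sub_zero] at hp hb ⊢
          rw [abs_lt] at hp hb ⊢
          constructor <;> linarith
        · right
          exact ⟨trivial, hb⟩
      refine (measureReal_mono hsub).trans ((measureReal_union_le _ _).trans ?_)
      rw [measureReal_prod_prod, measureReal_prod_prod]
      simp
    linarith
  · intro x c hc
    obtain ⟨c1, hc1, hc2⟩ := exists_between hc
    obtain ⟨c2, hc2', hc3⟩ := exists_between hc2
    have hev : ∀ᶠ x' in 𝓝 x, c2 < j x' := hcont.continuousAt.eventually_const_lt hc3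
    obtain ⟨r, hr, hb⟩ := Metric.eventually_nhds_iff_ball.1 hev
    refine ⟨r / 4, by positivity, ?_⟩
    have h1 := ldp_upper hs H (Metric.closedBall x (r / 2)) Metric.isClosed_closedBall c1 c2 hc2'
      (fun x' hx' => (hb x' (Metric.closedBall_subset_ball (by linarith) hx')).le)
    filter_upwards [h1, hQ1 (r / 4) (by positivity), absorb hs 2 hc1] with n h1 h2 h3
    have h4 := sumLaw_ge (P n) (Q n) (A := Metric.ball x (r / 4)) (B := Metric.ball 0 (r / 4))
      (C := Metric.closedBall x (r / 2)) Metric.isClosed_closedBall.measurableSet (by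
        intro a ha b hb
        simp only [Metric.mem_ball, Metric.mem_closedBall, Real.dist_eq, sub_zero] at ha hb ⊢
        rw [abs_lt] at ha hb
        rw [abs_le]
        constructor <;> linarith)
    have h5 : (0 : ℝ) ≤ (P n).real (Metric.ball x (r / 4)) := measureReal_nonneg
    nlinarith

set_option maxHeartbeats 1000000 in
/-- Gaussian deconvolution. -/
theorem transfer_gaussian {P Q : ℕ → Measure ℝ} [∀ n, IsProbabilityMeasure (P n)]
    [∀ n, IsProbabilityMeasure (Q n)] {s : ℕ → ℝ}
    (hs : Tendsto s atTop atTop) {l β : ℝ} (hl : 0 < l) (hlβ : l < β)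
    (H : HasLDP (fun n => sumLaw (P n) (Q n)) s (fun x => ENNReal.ofReal (l * x ^ 2 / 2)))
    (hQ1 : ∀ δ > 0, ∀ᶠ n in atTop, 1 / 2 ≤ (Q n).real (Metric.ball 0 δ))
    (hQL : ∀ z η : ℝ, 0 < η → ∀ᶠ n in atTop,
      Real.exp (-(s n * (β * (z ^ 2 / 2 + |z| * η)))) * (Q n).real (Metric.ball 0 η) ≤
        (Q n).real (Metric.ball z η))
    (hQU : ∀ z η : ℝ, ∀ᶠ n in atTop,
      (Q n).real (Metric.ball z η) ≤ Real.exp (-(s n * (β * (z ^ 2 / 2 - |z| * η))))) :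
    HasLDP P s (fun x => ENNReal.ofReal (x ^ 2 / (2 * (l⁻¹ - β⁻¹)))) := by
  have : ∀ n, IsProbabilityMeasure ((fun n => sumLaw (P n) (Q n)) n) := fun n => sumLaw_prob _ _
  have hβ : 0 < β := hl.trans hlβ
  have hd : 0 < β - l := sub_pos.2 hlβ
  obtain ⟨γ, hγ⟩ : ∃ γ, γ = β * l / (β - l) := ⟨_, rfl⟩
  have hγ0 : 0 < γ := by rw [hγ]; positivity
  have hIeq : (fun x : ℝ => ENNReal.ofReal (x ^ 2 / (2 * (l⁻¹ - β⁻¹)))) =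
      fun x => ENNReal.ofReal (γ * x ^ 2 / 2) := by
    funext x
    congr 1
    rw [hγ]
    have : l⁻¹ - β⁻¹ = (β - l) / (β * l) := by field_simp
    rw [this]
    field_simp
  rw [hIeq]
  have hbdd : ∀ g : ℝ, 0 < g → ∀ c : ℝ, ∃ K : ℝ, ∀ x, g * x ^ 2 / 2 ≤ c → |x| ≤ K := by
    intro g hg c
    refine ⟨Real.sqrt (2 * c / g), fun x hx => Real.abs_le_sqrt ?_⟩
    rw [le_div_iff₀ hg]
    linarith
  -- the tangency identity
  have key : ∀ x u : ℝ, γ * u ^ 2 / 2 + β * (β / (β - l) * x - u) ^ 2 / 2 =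
      l * (β / (β - l) * x) ^ 2 / 2 + (γ + β) / 2 * (u - x) ^ 2 := by
    intro x u
    rw [hγ]
    field_simp
    ring
  have hU : ∀ x c : ℝ, c < γ * x ^ 2 / 2 → ∃ δ > 0, ∀ᶠ n in atTop,
      (P n).real (Metric.ball x δ) ≤ Real.exp (-(s n * c)) := by
    intro x c hc
    obtain ⟨y, hy⟩ : ∃ y, y = β / (β - l) * x := ⟨_, rfl⟩
    have hk := key x x
    rw [← hy] at hk
    obtain ⟨z, hz⟩ : ∃ z, z = y - x := ⟨_, rfl⟩
    rw [← hz] at hk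
    obtain ⟨g, hg⟩ : ∃ g, g = γ * x ^ 2 / 2 - c := ⟨_, rfl⟩
    have hg0 : 0 < g := by rw [hg]; linarith
    have hD : 0 < 2 * l * |y| + β * |z| + 1 := by positivity
    obtain ⟨δ, hδ⟩ : ∃ δ, δ = g / (4 * (2 * l * |y| + β * |z| + 1)) := ⟨_, rfl⟩
    have hδ0 : 0 < δ := by rw [hδ]; positivity
    have hδe : δ * (2 * l * |y| + β * |z| + 1) = g / 4 := by rw [hδ]; field_simp
    refine ⟨δ, hδ0, ?_⟩
    have h1 := ldp_upper hs H (Metric.closedBall y (2 * δ)) Metric.isClosed_closedBall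
      (l * (y ^ 2 / 2 - 2 * δ * |y|) - g / 4) (l * (y ^ 2 / 2 - 2 * δ * |y|)) (by linarith)
      (fun x' hx' => by
        simp only [Metric.mem_closedBall, Real.dist_eq] at hx'
        have e1 : |y * (x' - y)| ≤ |y| * (2 * δ) := by
          rw [abs_mul]; exact mul_le_mul_of_nonneg_left hx' (abs_nonneg _)
        have e2 := neg_le_of_abs_le e1
        have e3 : y ^ 2 / 2 - 2 * δ * |y| ≤ x' ^ 2 / 2 := by nlinarith [sq_nonneg (x' - y)]
        have := mul_le_mul_of_nonneg_left e3 hl.le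
        linarith)
    have hlt : c + β * (z ^ 2 / 2 + |z| * δ) < l * (y ^ 2 / 2 - 2 * δ * |y|) - g / 4 := by
      nlinarith
    filter_upwards [h1, hQ1 δ hδ0, hQL z δ hδ0, absorb hs 2 hlt] with n h1 h2 h3 h4
    have h5 := sumLaw_ge (P n) (Q n) (A := Metric.ball x δ) (B := Metric.ball z δ)
      (C := Metric.closedBall y (2 * δ)) Metric.isClosed_closedBall.measurableSet (by
        intro a ha b hb
        simp only [Metric.mem_ball, Metric.mem_closedBall, Real.dist_eq] at ha hb ⊢
        rw [abs_lt] at ha hb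
        rw [abs_le]
        constructor <;> linarith)
    have h6 : (0 : ℝ) ≤ (P n).real (Metric.ball x δ) := measureReal_nonneg
    obtain ⟨E, hE⟩ : ∃ E, E = Real.exp (-(s n * (β * (z ^ 2 / 2 + |z| * δ)))) := ⟨_, rfl⟩
    have hE0 : 0 < E := by rw [hE]; exact Real.exp_pos _
    rw [← hE] at h3
    have h7 : E / 2 ≤ (Q n).real (Metric.ball z δ) := by nlinarith
    have h8 : (P n).real (Metric.ball x δ) * (E / 2) ≤
        Real.exp (-(s n * (l * (y ^ 2 / 2 - 2 * δ * |y|) - g / 4))) :=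
      (mul_le_mul_of_nonneg_left h7 h6).trans (h5.trans h1)
    have h9 : Real.exp (-(s n * (c + β * (z ^ 2 / 2 + |z| * δ)))) = Real.exp (-(s n * c)) * E := by
      rw [hE, ← Real.exp_add]; ring_nf
    rw [h9] at h4
    have h10 : (P n).real (Metric.ball x δ) * E ≤ Real.exp (-(s n * c)) * E := by linarith
    exact le_of_mul_le_mul_right h10 hE0
  have hT := tight_transfer hs (hbdd l hl) H hQ1
  refine ldp_of_local hs (fun x => by positivity) (by fun_prop) (hbdd γ hγ0) ?_ hU hT
  intro x η0 hη0 c hc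
  obtain ⟨y, hy⟩ : ∃ y, y = β / (β - l) * x := ⟨_, rfl⟩
  have hk := key x
  rw [← hy] at hk
  obtain ⟨z, hz⟩ : ∃ z, z = y - x := ⟨_, rfl⟩
  obtain ⟨g, hg⟩ : ∃ g, g = c - γ * x ^ 2 / 2 := ⟨_, rfl⟩
  have hg0 : 0 < g := by rw [hg]; linarith
  -- radius of the ball around `x`
  obtain ⟨δ, hδ0, hδη, hδ⟩ : ∃ δ > 0, δ ≤ η0 ∧ β * |z| * δ ≤ g / 8 := by
    refine ⟨min η0 (g / (8 * (β * |z| + 1))), by positivity, min_le_left _ _, ?_⟩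
    have e1 : min η0 (g / (8 * (β * |z| + 1))) ≤ g / (8 * (β * |z| + 1)) := min_le_right _ _
    have e2 : g / (8 * (β * |z| + 1)) * (β * |z| + 1) = g / 8 := by field_simp
    have e3 : 0 ≤ β * |z| := by positivity
    have e4 : 0 < g / (8 * (β * |z| + 1)) := by positivity
    nlinarith
  obtain ⟨ω, hω⟩ : ∃ ω, ω = (γ + β) / 2 * δ ^ 2 := ⟨_, rfl⟩
  have hω0 : 0 < ω := by rw [hω]; positivity
  obtain ⟨K, hK⟩ := hT (l * y ^ 2 / 2 + ω / 2)
  obtain ⟨η, hηp, hη1, hη2⟩ : ∃ η > 0, β * |z| * η ≤ g / 8 ∧ β * (|y| + |K|) * η ≤ ω / 8 := by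
    refine ⟨min (g / (8 * (β * |z| + 1))) (ω / (8 * (β * (|y| + |K|) + 1))), by positivity, ?_, ?_⟩
    · have e1 : min (g / (8 * (β * |z| + 1))) (ω / (8 * (β * (|y| + |K|) + 1))) ≤
        g / (8 * (β * |z| + 1)) := min_le_left _ _
      have e2 : g / (8 * (β * |z| + 1)) * (β * |z| + 1) = g / 8 := by field_simp
      have e3 : 0 ≤ β * |z| := by positivity
      have e4 : 0 < g / (8 * (β * |z| + 1)) := by positivity
      nlinarith
    · have e1 : min (g / (8 * (β * |z| + 1))) (ω / (8 * (β * (|y| + |K|) + 1))) ≤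
        ω / (8 * (β * (|y| + |K|) + 1)) := min_le_right _ _
      have e2 : ω / (8 * (β * (|y| + |K|) + 1)) * (β * (|y| + |K|) + 1) = ω / 8 := by field_simp
      have e3 : 0 ≤ β * (|y| + |K|) := by positivity
      have e4 : 0 < ω / (8 * (β * (|y| + |K|) + 1)) := by positivity
      nlinarith
  let B : Set (ℝ × ℝ) := {p : ℝ × ℝ | p.1 + p.2 ∈ Metric.ball y η}
  let M : ℕ → Measure ℝ := fun n => (((P n).prod (Q n)).restrict B).map Prod.fst
  have hMf : ∀ n, IsFiniteMeasure (M n) := fun n => by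
    dsimp only [M]; infer_instance
  have hM : ∀ n (S : Set ℝ), MeasurableSet S →
      (M n).real S = ((P n).prod (Q n)).real (Prod.fst ⁻¹' S ∩ B) := by
    intro n S hS
    dsimp only [M]
    rw [map_measureReal_apply measurable_fst hS, measureReal_restrict_apply (measurable_fst hS)]
  have hMle : ∀ n (u r : ℝ), (M n).real (Metric.ball u r) ≤
      (P n).real (Metric.ball u r) * (Q n).real (Metric.ball (y - u) (r + η)) := by
    intro n u r
    rw [hM n _ Metric.isOpen_ball.measurableSet, ← measureReal_prod_prod]
    refine measureReal_mono ?_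
    rintro ⟨a, b⟩ ⟨h1, h2⟩
    simp only [B, Set.mem_preimage, Metric.mem_ball, Real.dist_eq, Set.mem_ofPred_eq] at h1 h2
    refine ⟨?_, ?_⟩
    · simpa [Real.dist_eq] using h1
    · simp only [Metric.mem_ball, Real.dist_eq]
      rw [abs_lt] at h1 h2 ⊢
      constructor <;> linarith
  have hKc : IsCompact (Metric.closedBall (0 : ℝ) K \ Metric.ball x δ) :=
    (isCompact_closedBall (0 : ℝ) K).diff Metric.isOpen_ball
  obtain ⟨N, hN⟩ := compact_cover (M := M) (s := s) hKc (c := l * y ^ 2 / 2 + ω / 2) (by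
    intro u hu
    have hu1 : |u| ≤ |K| := by
      have := hu.1
      rw [Metric.mem_closedBall, dist_zero_right, Real.norm_eq_abs] at this
      exact this.trans (le_abs_self _)
    have hu2 : δ ≤ |u - x| := by
      have := hu.2
      rw [Metric.mem_ball, Real.dist_eq] at this
      exact not_lt.1 this
    obtain ⟨r, hr0, hr⟩ := hU u (γ * u ^ 2 / 2 - ω / 8) (by linarith)
    obtain ⟨r', hr'⟩ : ∃ r', r' = min r η := ⟨_, rfl⟩
    have hr'0 : 0 < r' := by rw [hr']; exact lt_min hr0 hηp
    refine ⟨r', hr'0, ?_⟩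
    filter_upwards [hr, hQU (y - u) (r' + η), hs.eventually_gt_atTop 0] with n h1 h2 hsn
    refine (hMle n u r').trans ?_
    have h3 : (P n).real (Metric.ball u r') ≤ Real.exp (-(s n * (γ * u ^ 2 / 2 - ω / 8))) :=
      (measureReal_mono (Metric.ball_subset_ball (hr' ▸ min_le_left _ _))).trans h1
    refine (mul_le_mul h3 h2 measureReal_nonneg (Real.exp_nonneg _)).trans ?_
    rw [← Real.exp_add, Real.exp_le_exp]
    have e0 : r' ≤ η := hr' ▸ min_le_right _ _
    have e1 : |y - u| ≤ |y| + |K| := (abs_sub _ _).trans (by linarith)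
    have e2 : δ ^ 2 ≤ (u - x) ^ 2 := by
      rw [← sq_abs (u - x)]
      exact pow_le_pow_left₀ hδ0.le hu2 2
    have e3 : ω ≤ (γ + β) / 2 * (u - x) ^ 2 := by
      rw [hω]; exact mul_le_mul_of_nonneg_left e2 (by positivity)
    have e4 : β * (|y - u| * (r' + η)) ≤ ω / 4 := by
      have : |y - u| * (r' + η) ≤ (|y| + |K|) * (η + η) := by gcongr
      have := mul_le_mul_of_nonneg_left this hβ.le
      have e : β * ((|y| + |K|) * (η + η)) = 2 * (β * (|y| + |K|) * η) := by ring
      linarith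
    have e5 := hk u
    have e6 : l * y ^ 2 / 2 + ω / 2 ≤
        (γ * u ^ 2 / 2 - ω / 8) + β * ((y - u) ^ 2 / 2 - |y - u| * (r' + η)) := by
      have e : β * ((y - u) ^ 2 / 2 - |y - u| * (r' + η)) =
        β * (y - u) ^ 2 / 2 - β * (|y - u| * (r' + η)) := by ring
      linarith
    have := mul_le_mul_of_nonneg_left e6 hsn.le
    linarith)
  obtain ⟨ω', hω', hω'1, hω'2⟩ : ∃ ω' > 0, ω' < ω / 2 ∧ ω' ≤ g / 4 :=
    ⟨min (ω / 4) (g / 4), by positivity, lt_of_le_of_lt (min_le_left _ _) (by linarith),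
      min_le_right _ _⟩
  have hlow := ldp_lower hs (fun x => by positivity) H y η hηp (l * y ^ 2 / 2 + ω')
    (by linarith)
  have hfin : l * y ^ 2 / 2 + ω' < c + β * (z ^ 2 / 2 - |z| * (δ + η)) := by
    have := hk x
    rw [← hz, sub_self] at this
    have e : β * (z ^ 2 / 2 - |z| * (δ + η)) =
      β * z ^ 2 / 2 - β * |z| * δ - β * |z| * η := by ring
    linarith
  filter_upwards [hlow, hN, hK, hQU z (δ + η), hs.eventually_gt_atTop 0,
    absorb hs (2 * (N + 1)) (show l * y ^ 2 / 2 + ω' < l * y ^ 2 / 2 + ω / 2 by linarith),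
    absorb hs 2 hfin] with n h1 h2 h3 h4 hsn h5 h6
  have h7 : (sumLaw (P n) (Q n)).real (Metric.ball y η) ≤
      (M n).real (Metric.ball x δ) + (M n).real (Metric.closedBall (0 : ℝ) K \ Metric.ball x δ) +
        (P n).real (Metric.closedBall 0 K)ᶜ := by
    have e1 : (sumLaw (P n) (Q n)).real (Metric.ball y η) = (M n).real Set.univ := by
      rw [sumLaw_real _ _ Metric.isOpen_ball.measurableSet, hM n _ MeasurableSet.univ]
      simp [B]
    have e2 : (Set.univ : Set ℝ) ⊆ (Metric.ball x δ ∪ (Metric.closedBall (0 : ℝ) K \ Metric.ball x δ)) ∪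
        (Metric.closedBall 0 K)ᶜ := by
      intro a _
      by_cases ha : a ∈ Metric.closedBall (0 : ℝ) K
      · by_cases hb : a ∈ Metric.ball x δ
        · exact Or.inl (Or.inl hb)
        · exact Or.inl (Or.inr ⟨ha, hb⟩)
      · exact Or.inr ha
    have e3 : (M n).real (Metric.closedBall 0 K)ᶜ ≤ (P n).real (Metric.closedBall 0 K)ᶜ := by
      rw [hM n _ Metric.isClosed_closedBall.measurableSet.compl]
      have : (P n).real (Metric.closedBall 0 K)ᶜ =
          ((P n).prod (Q n)).real ((Metric.closedBall 0 K)ᶜ ×ˢ Set.univ) := by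
        rw [measureReal_prod_prod]; simp
      rw [this]
      exact measureReal_mono (fun p hp => ⟨hp.1, trivial⟩)
    rw [e1]
    have e4 := (measureReal_mono (μ := M n) e2).trans (measureReal_union_le _ _)
    have e5 := measureReal_union_le (μ := M n) (Metric.ball x δ)
      (Metric.closedBall (0 : ℝ) K \ Metric.ball x δ)
    linarith
  have h8 := hMle n x δ
  rw [← hz] at h8
  have h9 : (P n).real (Metric.ball x δ) ≤ (P n).real (Metric.ball x η0) :=
    measureReal_mono (Metric.ball_subset_ball hδη)
  refine le_trans ?_ h9
  obtain ⟨E, hE⟩ : ∃ E, E = Real.exp (-(s n * (β * (z ^ 2 / 2 - |z| * (δ + η))))) := ⟨_, rfl⟩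
  have hE0 : 0 < E := by rw [hE]; exact Real.exp_pos _
  rw [← hE] at h4
  have h10 : Real.exp (-(s n * (c + β * (z ^ 2 / 2 - |z| * (δ + η))))) =
      Real.exp (-(s n * c)) * E := by
    rw [hE, ← Real.exp_add]; ring_nf
  rw [h10] at h6
  have h11 : (P n).real (Metric.ball x δ) * (Q n).real (Metric.ball z (δ + η)) ≤
      (P n).real (Metric.ball x δ) * E := mul_le_mul_of_nonneg_left h4 measureReal_nonneg
  refine le_of_mul_le_mul_right ?_ hE0
  linarith
theorem gauss_chernoff {v : ℝ≥0} {S : Set ℝ} {a θ : ℝ} (hS : MeasurableSet S)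
    (h : ∀ x ∈ S, a ≤ θ * x) :
    (gaussianReal 0 v).real S ≤ Real.exp (v * θ ^ 2 / 2 - a) := by
  have h1 : mgf id (gaussianReal 0 v) θ = Real.exp (v * θ ^ 2 / 2) := by
    have := congrFun (mgf_id_gaussianReal (μ := 0) (v := v)) θ
    simpa using this
  have h2 : (gaussianReal 0 v).real S * Real.exp a ≤ mgf id (gaussianReal 0 v) θ := by
    have hint : Integrable (fun x => Real.exp (θ * x)) (gaussianReal 0 v) :=
      integrable_exp_mul_gaussianReal θ
    calc (gaussianReal 0 v).real S * Real.exp a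
        = ∫ x in S, Real.exp a ∂(gaussianReal 0 v) := by
          rw [setIntegral_const, smul_eq_mul]
      _ ≤ ∫ x in S, Real.exp (θ * x) ∂(gaussianReal 0 v) := by
          refine setIntegral_mono_on (by simp) hint.integrableOn hS ?_
          intro x hx
          exact Real.exp_le_exp.2 (h x hx)
      _ ≤ ∫ x, Real.exp (θ * x) ∂(gaussianReal 0 v) :=
          setIntegral_le_integral hint (ae_of_all _ fun x => Real.exp_nonneg _)
      _ = _ := by simp [mgf]
  rw [h1] at h2
  rw [Real.exp_sub, le_div_iff₀ (Real.exp_pos _)]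
  exact h2

theorem gauss_upper {v : ℝ≥0} (hv : v ≠ 0) (z η : ℝ) :
    (gaussianReal 0 v).real (Metric.ball z η) ≤
      Real.exp (-((v : ℝ)⁻¹ * (z ^ 2 / 2 - |z| * η))) := by
  have hv0 : (0 : ℝ) < v := by positivity
  refine (gauss_chernoff (θ := z / v) (a := (z ^ 2 - |z| * η) / v)
    Metric.isOpen_ball.measurableSet ?_).trans (le_of_eq ?_)
  · intro x hx
    rw [Metric.mem_ball, Real.dist_eq] at hx
    rw [div_mul_eq_mul_div]
    gcongr
    have : |z * (x - z)| ≤ |z| * η := by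
      rw [abs_mul]; exact mul_le_mul_of_nonneg_left hx.le (abs_nonneg _)
    nlinarith [neg_le_of_abs_le this]
  · congr 1
    field_simp
    ring

theorem gauss_tail {v : ℝ≥0} (hv : v ≠ 0) {δ : ℝ} (hδ : 0 < δ) :
    (gaussianReal 0 v).real (Metric.ball 0 δ)ᶜ ≤
      2 * Real.exp (-((v : ℝ)⁻¹ * (δ ^ 2 / 2))) := by
  have hv0 : (0 : ℝ) < v := by positivity
  have hsub : (Metric.ball (0 : ℝ) δ)ᶜ ⊆ Set.Ici δ ∪ Set.Iic (-δ) := by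
    intro x hx
    rw [Set.mem_compl_iff, Metric.mem_ball, dist_zero_right, Real.norm_eq_abs, not_lt, le_abs] at hx
    rcases hx with hx | hx
    · exact Or.inl hx
    · right; change x ≤ -δ; linarith
  have h1 : (gaussianReal 0 v).real (Set.Ici δ) ≤ Real.exp (-((v : ℝ)⁻¹ * (δ ^ 2 / 2))) := by
    refine (gauss_chernoff (θ := δ / v) (a := δ / v * δ) measurableSet_Ici ?_).trans (le_of_eq ?_)
    · intro x hx
      exact mul_le_mul_of_nonneg_left hx (by positivity)
    · congr 1; field_simp; ring
  have h2 : (gaussianReal 0 v).real (Set.Iic (-δ)) ≤ Real.exp (-((v : ℝ)⁻¹ * (δ ^ 2 / 2))) := by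
    refine (gauss_chernoff (θ := -(δ / v)) (a := δ / v * δ) measurableSet_Iic ?_).trans (le_of_eq ?_)
    · intro x hx
      have hx' : x ≤ -δ := hx
      have := mul_le_mul_of_nonneg_left hx' (show 0 ≤ δ / v by positivity)
      linarith
    · congr 1; field_simp; ring
  have := (measureReal_mono (μ := gaussianReal 0 v) hsub).trans (measureReal_union_le _ _)
  linarith

theorem gauss_lower {v : ℝ≥0} (hv : v ≠ 0) (z η : ℝ) :
    Real.exp (-((v : ℝ)⁻¹ * (z ^ 2 / 2 + |z| * η))) * (gaussianReal 0 v).real (Metric.ball 0 η) ≤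
      (gaussianReal 0 v).real (Metric.ball z η) := by
  have hv0 : (0 : ℝ) < v := by positivity
  have h1 : (gaussianReal 0 v).real (Metric.ball z η) =
      (gaussianReal (-z) v).real (Metric.ball 0 η) := by
    have : gaussianReal (-z) v = (gaussianReal 0 v).map (fun x => x + (-z)) := by
      rw [gaussianReal_map_add_const]; simp
    rw [this, map_measureReal_apply (by fun_prop) Metric.isOpen_ball.measurableSet]
    congr 1
    ext x
    simp [Real.dist_eq, sub_eq_add_neg]
  have hr : ∀ μ : ℝ, (gaussianReal μ v).real (Metric.ball 0 η) =
      ∫ x in Metric.ball 0 η, gaussianPDFReal μ v x := by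
    intro μ
    rw [Measure.real, gaussianReal_apply_eq_integral μ hv, ENNReal.toReal_ofReal]
    exact integral_nonneg fun x => gaussianPDFReal_nonneg _ _ _
  rw [h1, hr, hr, ← integral_const_mul]
  refine setIntegral_mono_on ((integrable_gaussianPDFReal _ _).integrableOn.const_mul _)
    (integrable_gaussianPDFReal _ _).integrableOn Metric.isOpen_ball.measurableSet ?_
  intro x hx
  rw [Metric.mem_ball, dist_zero_right, Real.norm_eq_abs] at hx
  simp only [gaussianPDFReal]
  rw [mul_left_comm, ← Real.exp_add]
  gcongr
  have : |z * x| ≤ |z| * η := by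
    rw [abs_mul]; exact mul_le_mul_of_nonneg_left hx.le (abs_nonneg _)
  have e := le_of_abs_le this
  have e1 : -((v : ℝ)⁻¹ * (z ^ 2 / 2 + |z| * η)) + -(x - 0) ^ 2 / (2 * v) =
    -(z ^ 2 + 2 * (|z| * η) + x ^ 2) / (2 * v) := by field_simp; ring
  rw [e1]
  gcongr
  nlinarith
theorem good_fraction (ν : Measure ℝ) [IsProbabilityMeasure ν]
    (μ : Measure (ℕ → ℝ)) [IsProbabilityMeasure μ] (hμ : IsProductMeasure ν μ) :
    ∃ M : ℝ, 0 ≤ M ∧ ∀ᵐ h ∂μ, ∀ᶠ n : ℕ in atTop,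
      (n : ℝ) / 4 ≤ ∑ i : Fin n, if |h i| ≤ M then (1 : ℝ) else 0 := by
  obtain ⟨M, hM⟩ : ∃ M : ℕ, (1 / 2 : ℝ) < ν.real {x : ℝ | |x| ≤ M} := by
    have hmono : Monotone (fun M : ℕ => {x : ℝ | |x| ≤ M}) := by
      intro a b hab x hx
      have hx' : |x| ≤ a := hx
      exact hx'.trans (by exact_mod_cast hab)
    have h1 := tendsto_measure_iUnion_atTop (μ := ν) hmono
    have h2 : (⋃ M : ℕ, {x : ℝ | |x| ≤ M}) = Set.univ := by
      ext x
      simp only [Set.mem_iUnion, Set.mem_univ, iff_true]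
      exact exists_nat_ge |x|
    rw [h2, measure_univ] at h1
    have h3 := (ENNReal.tendsto_toReal ENNReal.one_ne_top).comp h1
    rw [ENNReal.toReal_one] at h3
    exact (h3.eventually_const_lt (by norm_num : (1 / 2 : ℝ) < 1)).exists
  refine ⟨M, by positivity, ?_⟩
  have hmap : ∀ i : ℕ, μ.map (fun h => h i) = ν := by
    intro i
    have h1 := hμ (i + 1)
    have h2 : (fun h : ℕ → ℝ => h i) =
        (fun g : Fin (i + 1) → ℝ => g (Fin.last i)) ∘ (fun h (j : Fin (i + 1)) => h (j : ℕ)) := by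
      funext h; simp
    rw [h2, ← Measure.map_map (by fun_prop) (by fun_prop), h1]
    exact (measurePreserving_eval (fun _ : Fin (i + 1) => ν) (Fin.last i)).map_eq
  have hind : ∀ i j : ℕ, i ≠ j → IndepFun (fun h : ℕ → ℝ => h i) (fun h => h j) μ := by
    intro i j hij
    have h1 : iIndepFun (fun (a : Fin (max i j + 1)) (h : ℕ → ℝ) => h a) μ := by
      rw [iIndepFun_iff_map_fun_eq_pi_map (fun a => (measurable_pi_apply _).aemeasurable)]
      rw [hμ]
      congr 1
      funext a
      exact (hmap a).symm
    exact h1.indepFun (i := ⟨i, by omega⟩) (j := ⟨j, by omega⟩) (by simpa using hij)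
  let φ : ℝ → ℝ := fun x => if |x| ≤ M then 1 else 0
  have hset : MeasurableSet {x : ℝ | |x| ≤ M} := measurableSet_le (by fun_prop) (by fun_prop)
  have hφ : Measurable φ := Measurable.ite hset measurable_const measurable_const
  have hsl := strong_law_ae_real (μ := μ) (fun i h => φ (h i))
    (by
      refine Integrable.of_bound (C := 1) (hφ.comp (measurable_pi_apply 0)).aestronglyMeasurable
        (ae_of_all _ fun h => ?_)
      dsimp only [φ]
      split_ifs <;> simp)
    (fun i j hij => (hind i j hij).comp hφ hφ)
    (fun i => by
      have : IdentDistrib (fun h : ℕ → ℝ => h i) (fun h => h 0) μ μ :=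
        ⟨(measurable_pi_apply _).aemeasurable, (measurable_pi_apply _).aemeasurable, by rw [hmap, hmap]⟩
      exact this.comp hφ)
  have hmean : ∫ h, φ (h 0) ∂μ = ν.real {x : ℝ | |x| ≤ M} := by
    rw [← integral_map (φ := fun h : ℕ → ℝ => h 0) (f := φ) (measurable_pi_apply _).aemeasurable
      hφ.aestronglyMeasurable, hmap]
    have : φ = Set.indicator {x : ℝ | |x| ≤ M} 1 := by
      funext x
      simp [φ, Set.indicator_apply]
    rw [this, integral_indicator_one hset]
  filter_upwards [hsl] with h hh
  rw [hmean] at hh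
  filter_upwards [hh.eventually_const_lt (show (1 / 4 : ℝ) < _ by linarith),
    eventually_gt_atTop 0] with n hn hn0
  rw [lt_div_iff₀ (by exact_mod_cast hn0)] at hn
  have : ∑ i : Fin n, (if |h i| ≤ M then (1 : ℝ) else 0) = ∑ i ∈ Finset.range n, φ (h i) :=
    Fin.sum_univ_eq_sum_range (fun i => φ (h i)) n
  rw [this]
  linarith

theorem cosh_factor {a b C : ℝ} (hC : Real.cosh a ^ 2 ≤ C) (hb : b ^ 2 ≤ 1) :
    Real.cosh a ^ 2 * Real.exp (b ^ 2 / (2 * C)) ≤ Real.cosh (a + b) * Real.cosh (a - b) := by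
  have h1 : Real.cosh (a + b) * Real.cosh (a - b) = Real.cosh a ^ 2 + Real.sinh b ^ 2 := by
    rw [Real.cosh_add, Real.cosh_sub]
    have e1 := Real.cosh_sq a
    have e2 := Real.cosh_sq b
    have : (Real.cosh a * Real.cosh b + Real.sinh a * Real.sinh b) *
      (Real.cosh a * Real.cosh b - Real.sinh a * Real.sinh b) =
      Real.cosh a ^ 2 * Real.cosh b ^ 2 - Real.sinh a ^ 2 * Real.sinh b ^ 2 := by ring
    rw [this, e2, e1]
    ring
  have h2 : b ^ 2 ≤ Real.sinh b ^ 2 := by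
    rw [sq_le_sq, Real.abs_sinh]
    exact Real.self_le_sinh_iff.2 (abs_nonneg b)
  have hc1 : 1 ≤ Real.cosh a ^ 2 := one_le_pow₀ (Real.one_le_cosh a)
  have hC1 : 1 ≤ C := hc1.trans hC
  obtain ⟨u, hu⟩ : ∃ u, u = b ^ 2 / (2 * C) := ⟨_, rfl⟩
  have hu0 : 0 ≤ u := by rw [hu]; positivity
  have hu1 : 2 * C * u = b ^ 2 := by rw [hu]; field_simp
  have hu2 : u ≤ 1 / 2 := by nlinarith
  have h3 : Real.exp u ≤ 1 + 2 * u := by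
    have e1 := Real.one_sub_le_exp_neg u
    have e2 : Real.exp u * Real.exp (-u) = 1 := by rw [← Real.exp_add]; simp
    have e3 := Real.exp_pos u
    have e4 : Real.exp u * (1 - u) ≤ 1 := by
      exact (mul_le_mul_of_nonneg_left e1 e3.le).trans e2.le
    have e5 : 1 ≤ (1 + 2 * u) * (1 - u) := by nlinarith
    exact le_of_mul_le_mul_right (e4.trans e5) (by linarith)
  rw [h1, ← hu]
  calc Real.cosh a ^ 2 * Real.exp u ≤ Real.cosh a ^ 2 * (1 + 2 * u) := by gcongr
    _ ≤ Real.cosh a ^ 2 + Real.sinh b ^ 2 := by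
      have : Real.cosh a ^ 2 * (2 * u) ≤ C * (2 * u) := by gcongr
      nlinarith

/-- The (unnormalised) density of the Hubbard-Stratonovich transform. -/
def hsDensity (β : ℝ) (h : ℕ → ℝ) (n : ℕ) (x : ℝ) : ℝ :=
  Real.exp (-(β * n * x ^ 2 / 2)) * ∏ i : Fin n, Real.cosh (β * (x + h i))

theorem hsDensity_pos (β : ℝ) (h : ℕ → ℝ) (n : ℕ) (x : ℝ) : 0 < hsDensity β h n x :=
  mul_pos (Real.exp_pos _) (Finset.prod_pos fun _ _ => Real.cosh_pos _)

theorem hsDensity_ineq {β : ℝ} (h : ℕ → ℝ) (n : ℕ) {x e M D N : ℝ}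
    (hx : |x| ≤ D) (he : (β * e) ^ 2 ≤ 1)
    (hN : N ≤ ∑ i : Fin n, if |h i| ≤ M then (1 : ℝ) else 0) :
    hsDensity β h n x ≤ 1 / 2 * Real.exp ((β * n * e ^ 2 -
      (β * e) ^ 2 / (2 * Real.cosh (β * (D + M)) ^ 2) * N) / 2) *
        (hsDensity β h n (x + e) + hsDensity β h n (x - e)) := by
  obtain ⟨C, hC⟩ : ∃ C, C = Real.cosh (β * (D + M)) ^ 2 := ⟨_, rfl⟩
  rw [← hC]
  obtain ⟨q, hq⟩ : ∃ q, q = (β * e) ^ 2 / (2 * C) := ⟨_, rfl⟩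
  have hC0 : 0 < C := by rw [hC]; have := Real.cosh_pos (β * (D + M)); positivity
  have hq0 : 0 ≤ q := by rw [hq]; positivity
  rw [← hq]
  have hfac : ∀ i : Fin n, Real.cosh (β * (x + h i)) ^ 2 *
      Real.exp (q * if |h i| ≤ M then (1 : ℝ) else 0) ≤
      Real.cosh (β * (x + e + h i)) * Real.cosh (β * (x - e + h i)) := by
    intro i
    have e1 : β * (x + e + h i) = β * (x + h i) + β * e := by ring
    have e2 : β * (x - e + h i) = β * (x + h i) - β * e := by ring
    rw [e1, e2]
    split_ifs with hi
    · rw [mul_one, hq]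
      refine cosh_factor ?_ he
      rw [hC]
      refine pow_le_pow_left₀ (Real.cosh_pos _).le ?_ 2
      rw [Real.cosh_le_cosh, abs_mul, abs_mul]
      refine mul_le_mul_of_nonneg_left ?_ (abs_nonneg _)
      calc |x + h i| ≤ |x| + |h i| := abs_add_le _ _
        _ ≤ D + M := by linarith
        _ ≤ |D + M| := le_abs_self _
    · rw [mul_zero, Real.exp_zero, mul_one]
      have := cosh_factor (a := β * (x + h i)) (b := β * e) le_rfl he
      refine le_trans ?_ this
      refine le_mul_of_one_le_right (by positivity) (Real.one_le_exp (by positivity))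
  have hprod : (∏ i : Fin n, Real.cosh (β * (x + h i))) ^ 2 * Real.exp (q * N) ≤
      (∏ i : Fin n, Real.cosh (β * (x + e + h i))) * ∏ i : Fin n, Real.cosh (β * (x - e + h i)) := by
    calc _ ≤ (∏ i : Fin n, Real.cosh (β * (x + h i))) ^ 2 *
          Real.exp (q * ∑ i : Fin n, if |h i| ≤ M then (1 : ℝ) else 0) := by gcongr
      _ = ∏ i : Fin n, (Real.cosh (β * (x + h i)) ^ 2 *
          Real.exp (q * if |h i| ≤ M then (1 : ℝ) else 0)) := by
        rw [Finset.prod_mul_distrib, Finset.prod_pow, Finset.mul_sum, Real.exp_sum]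
      _ ≤ _ := by
        rw [← Finset.prod_mul_distrib]
        exact Finset.prod_le_prod (fun i _ => by positivity) (fun i _ => hfac i)
  have hF := hsDensity_pos β h n x
  have hF1 := hsDensity_pos β h n (x + e)
  have hF2 := hsDensity_pos β h n (x - e)
  obtain ⟨E, hE⟩ : ∃ E, E = Real.exp ((β * n * e ^ 2 - q * N) / 2) := ⟨_, rfl⟩
  have hE0 : 0 < E := by rw [hE]; exact Real.exp_pos _
  have hsq : hsDensity β h n x ^ 2 ≤ E ^ 2 * (hsDensity β h n (x + e) * hsDensity β h n (x - e)) := by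
    have e1 : E ^ 2 = Real.exp (β * n * e ^ 2) * Real.exp (-(q * N)) := by
      rw [hE, ← Real.exp_nat_mul, ← Real.exp_add]; congr 1; push_cast; ring
    have e2 : Real.exp (-(q * N)) * Real.exp (q * N) = 1 := by rw [← Real.exp_add]; simp
    have e3 : Real.exp (-(β * n * x ^ 2 / 2)) ^ 2 = Real.exp (β * n * e ^ 2) *
        (Real.exp (-(β * n * (x + e) ^ 2 / 2)) * Real.exp (-(β * n * (x - e) ^ 2 / 2))) := by
      rw [← Real.exp_nat_mul, ← Real.exp_add, ← Real.exp_add]; congr 1; push_cast; ring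
    unfold hsDensity
    have e4 := mul_le_mul_of_nonneg_left hprod (Real.exp_nonneg (-(q * N)))
    have e5 : (∏ i : Fin n, Real.cosh (β * (x + h i))) ^ 2 ≤ Real.exp (-(q * N)) *
      ((∏ i : Fin n, Real.cosh (β * (x + e + h i))) *
        ∏ i : Fin n, Real.cosh (β * (x - e + h i))) := by
      refine le_trans (le_of_eq ?_) e4
      rw [mul_left_comm, e2, mul_one]
    rw [mul_pow, e1]
    refine (mul_le_mul_of_nonneg_left e5 (sq_nonneg _)).trans (le_of_eq ?_)
    rw [e3]
    ring
  rw [← hE]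
  refine abs_le_of_sq_le_sq' ?_ (by positivity) |>.2
  refine hsq.trans ?_
  have : hsDensity β h n (x + e) * hsDensity β h n (x - e) ≤
      (1 / 2 * (hsDensity β h n (x + e) + hsDensity β h n (x - e))) ^ 2 := by
    nlinarith [sq_nonneg (hsDensity β h n (x + e) - hsDensity β h n (x - e))]
  calc _ ≤ E ^ 2 * (1 / 2 * (hsDensity β h n (x + e) + hsDensity β h n (x - e))) ^ 2 := by gcongr
    _ = _ := by ring
theorem gibbsWeight_pos (β : ℝ) (h : ℕ → ℝ) (n : ℕ) (σ : Fin n → Bool) :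
    0 < gibbsWeight β h n σ := Real.exp_pos _

theorem gibbsZ_pos (β : ℝ) (h : ℕ → ℝ) (n : ℕ) :
    0 < ∑ σ : Fin n → Bool, gibbsWeight β h n σ :=
  Finset.sum_pos (fun σ _ => gibbsWeight_pos β h n σ) Finset.univ_nonempty

theorem gibbs_prob (β : ℝ) (h : ℕ → ℝ) (n : ℕ) : IsProbabilityMeasure (gibbsMeasure β h n) := by
  constructor
  unfold gibbsMeasure
  simp only [Measure.smul_apply, Measure.finsetSum_apply, measure_univ, smul_eq_mul, mul_one]
  rw [← ENNReal.ofReal_sum_of_nonneg (fun σ _ => (gibbsWeight_pos β h n σ).le)]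
  refine ENNReal.inv_mul_cancel ?_ ENNReal.ofReal_ne_top
  simpa using gibbsZ_pos β h n

theorem sumLaw_gibbs (β : ℝ) (h : ℕ → ℝ) (n : ℕ) (X : (Fin n → Bool) → ℝ) {v : ℝ≥0} (hv : v ≠ 0)
    {C : Set ℝ} (hC : MeasurableSet C) :
    (sumLaw ((gibbsMeasure β h n).map X) (gaussianReal 0 v)).real C =
      ∫ y in C, (∑ σ : Fin n → Bool, gibbsWeight β h n σ)⁻¹ *
        ∑ σ : Fin n → Bool, gibbsWeight β h n σ * gaussianPDFReal (X σ) v y := by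
  have hg := gibbs_prob β h n
  have hX : Measurable X := measurable_of_finite X
  have hP : IsProbabilityMeasure ((gibbsMeasure β h n).map X) :=
    Measure.isProbabilityMeasure_map hX.aemeasurable
  have hset : MeasurableSet {p : ℝ × ℝ | p.1 + p.2 ∈ C} :=
    (measurable_fst.add measurable_snd) hC
  have h1 : ∀ x : ℝ, gaussianReal 0 v (Prod.mk x ⁻¹' {p : ℝ × ℝ | p.1 + p.2 ∈ C}) =
      gaussianReal x v C := by
    intro x
    have : gaussianReal x v = (gaussianReal 0 v).map (fun y => x + y) := by
      rw [gaussianReal_map_const_add]; simp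
    rw [this, Measure.map_apply (by fun_prop) hC]
    rfl
  have hr : ∀ x : ℝ, gaussianReal x v C = ENNReal.ofReal (∫ y in C, gaussianPDFReal x v y) :=
    fun x => gaussianReal_apply_eq_integral x hv C
  rw [sumLaw_real _ _ hC, Measure.real, Measure.prod_apply hset]
  simp only [h1]
  rw [lintegral_map (by
    have := measurable_measure_prodMk_left (ν := gaussianReal 0 v) hset
    simpa only [h1] using this) hX]
  unfold gibbsMeasure
  rw [lintegral_smul_measure, lintegral_finsetSum_measure]
  simp only [lintegral_smul_measure, lintegral_dirac, smul_eq_mul, hr]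
  rw [ENNReal.toReal_mul, ENNReal.toReal_inv, ENNReal.toReal_ofReal (gibbsZ_pos β h n).le,
    ENNReal.toReal_sum (fun σ _ => ENNReal.mul_ne_top ENNReal.ofReal_ne_top ENNReal.ofReal_ne_top),
    integral_const_mul, integral_finsetSum _ (fun σ _ =>
      ((integrable_gaussianPDFReal _ _).integrableOn.const_mul _))]
  congr 1
  refine Finset.sum_congr rfl fun σ _ => ?_
  rw [ENNReal.toReal_mul, ENNReal.toReal_ofReal (gibbsWeight_pos β h n σ).le,
    ENNReal.toReal_ofReal (integral_nonneg fun y => gaussianPDFReal_nonneg _ _ _),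
    integral_const_mul]

theorem sum_spins (β : ℝ) (h : ℕ → ℝ) (n : ℕ) (x : ℝ) :
    ∑ σ : Fin n → Bool, Real.exp (∑ i : Fin n, β * (x + h i) * spin (σ i)) =
      2 ^ n * ∏ i : Fin n, Real.cosh (β * (x + h i)) := by
  simp only [Real.exp_sum]
  rw [← Fintype.prod_sum (fun (i : Fin n) (b : Bool) => Real.exp (β * (x + h i) * spin b))]
  have : ∀ i : Fin n, ∑ b : Bool, Real.exp (β * (x + h i) * spin b) =
      2 * Real.cosh (β * (x + h i)) := by
    intro i
    rw [Fintype.sum_bool, Real.cosh_eq]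
    simp [spin]
    ring
  simp only [this]
  rw [Finset.prod_mul_distrib]
  simp

/-- Scaled Gaussian variance. -/
def vn (β α : ℝ) (n : ℕ) : ℝ≥0 := Real.toNNReal (β * (n : ℝ) ^ (2 * α - 1))⁻¹

theorem vn_inv {β α : ℝ} (hβ : 0 < β) (n : ℕ) :
    ((vn β α n : ℝ≥0) : ℝ)⁻¹ = β * (n : ℝ) ^ (2 * α - 1) := by
  unfold vn
  rw [Real.coe_toNNReal _ (by positivity), inv_inv]

theorem vn_ne {β α : ℝ} (hβ : 0 < β) {n : ℕ} (hn : 0 < n) : vn β α n ≠ 0 := by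
  have : (0 : ℝ) < n := by exact_mod_cast hn
  unfold vn
  rw [Ne, Real.toNNReal_eq_zero, not_le]
  positivity

theorem density_eq {β α : ℝ} (hβ : 0 < β) (m : ℝ) (h : ℕ → ℝ) {n : ℕ} (hn : 0 < n) :
    ∃ A : ℝ, 0 ≤ A ∧ ∀ y : ℝ, (∑ σ : Fin n → Bool, gibbsWeight β h n σ)⁻¹ *
        ∑ σ : Fin n → Bool, gibbsWeight β h n σ *
          gaussianPDFReal ((mag σ - n * m) / (n : ℝ) ^ α) (vn β α n) y =
      A * hsDensity β h n (m + y * (n : ℝ) ^ (α - 1)) := by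
  have hn0 : (0 : ℝ) < n := by exact_mod_cast hn
  refine ⟨(∑ σ : Fin n → Bool, gibbsWeight β h n σ)⁻¹ * ((√(2 * π * (vn β α n)))⁻¹ * 2 ^ n),
    mul_nonneg (inv_nonneg.2 (gibbsZ_pos β h n).le) (by positivity), fun y => ?_⟩
  rw [mul_assoc]
  congr 1
  obtain ⟨x, hx⟩ : ∃ x, x = m + y * (n : ℝ) ^ (α - 1) := ⟨_, rfl⟩
  rw [← hx]
  have hterm : ∀ σ : Fin n → Bool, gibbsWeight β h n σ *
      gaussianPDFReal ((mag σ - n * m) / (n : ℝ) ^ α) (vn β α n) y =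
      (√(2 * π * (vn β α n)))⁻¹ * Real.exp (-(β * n * x ^ 2 / 2)) *
        Real.exp (∑ i : Fin n, β * (x + h i) * spin (σ i)) := by
    intro σ
    unfold gibbsWeight gaussianPDFReal
    rw [mul_left_comm, mul_assoc _ (Real.exp (-(β * n * x ^ 2 / 2))), ← Real.exp_add,
      ← Real.exp_add]
    congr 2
    have hsum : ∑ i : Fin n, β * (x + h i) * spin (σ i) =
        β * x * mag σ + β * ∑ i : Fin n, h i * spin (σ i) := by
      unfold mag
      rw [Finset.mul_sum, Finset.mul_sum, ← Finset.sum_add_distrib]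
      exact Finset.sum_congr rfl fun i _ => by ring
    rw [hsum]
    have e1 : -(y - (mag σ - n * m) / (n : ℝ) ^ α) ^ 2 / (2 * (vn β α n : ℝ)) =
        -(((vn β α n : ℝ≥0) : ℝ)⁻¹ * (y - (mag σ - n * m) / (n : ℝ) ^ α) ^ 2) / 2 := by
      rw [div_mul_eq_div_div, div_right_comm, div_eq_mul_inv _ (vn β α n : ℝ)]
      ring
    rw [e1, vn_inv hβ]
    obtain ⟨w, hw⟩ : ∃ w, w = (n : ℝ) ^ α := ⟨_, rfl⟩
    have hw0 : 0 < w := by rw [hw]; positivity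
    have p1 : (n : ℝ) ^ (2 * α - 1) = w ^ 2 / n := by
      rw [Real.rpow_sub hn0, Real.rpow_one, hw, ← Real.rpow_natCast, ← Real.rpow_mul hn0.le]
      congr 2
      push_cast; ring
    have p2 : (n : ℝ) ^ (α - 1) = w / n := by
      rw [Real.rpow_sub hn0, Real.rpow_one, hw]
    rw [p2] at hx
    rw [p1, ← hw, hx]
    field_simp
    ring
  simp only [hterm]
  rw [← Finset.mul_sum, sum_spins]
  unfold hsDensity
  ring

theorem ball_ineq {β α : ℝ} (hβ : 0 < β) (hα : α < 1) (m : ℝ) (h : ℕ → ℝ) {M : ℝ}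
    {n : ℕ} (hn : 0 < n) (hsmall : (β * (n : ℝ) ^ (α - 1)) ^ 2 ≤ 1)
    (hN : (n : ℝ) / 4 ≤ ∑ i : Fin n, if |h i| ≤ M then (1 : ℝ) else 0)
    {δ : ℝ} (hδ : δ ≤ 1) (R : Measure ℝ)
    (hR : R = sumLaw ((gibbsMeasure β h n).map (fun σ => (mag σ - n * m) / (n : ℝ) ^ α))
      (gaussianReal 0 (vn β α n))) :
    R.real (Metric.ball 0 δ) ≤ 1 / 2 * Real.exp ((n : ℝ) ^ (2 * α - 1) * (β -
      β ^ 2 / (8 * Real.cosh (β * (|m| + 1 + M)) ^ 2)) / 2) *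
      (R.real (Metric.ball (-1) δ) + R.real (Metric.ball 1 δ)) := by
  have hn0 : (0 : ℝ) < n := by exact_mod_cast hn
  have hn1 : (1 : ℝ) ≤ n := by exact_mod_cast hn
  obtain ⟨A, hA, hρ⟩ := density_eq (α := α) hβ m h hn
  obtain ⟨e, he⟩ : ∃ e, e = (n : ℝ) ^ (α - 1) := ⟨_, rfl⟩
  let ρ : ℝ → ℝ := fun y => (∑ σ : Fin n → Bool, gibbsWeight β h n σ)⁻¹ *
        ∑ σ : Fin n → Bool, gibbsWeight β h n σ *
          gaussianPDFReal ((mag σ - n * m) / (n : ℝ) ^ α) (vn β α n) y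
  have hρi : Integrable ρ := by
    refine Integrable.const_mul (integrable_finsetSum _ fun σ _ => ?_) _
    exact (integrable_gaussianPDFReal _ _).const_mul _
  have hRC : ∀ C, MeasurableSet C → R.real C = ∫ y in C, ρ y := by
    intro C hC
    rw [hR, sumLaw_gibbs β h n _ (vn_ne hβ hn) hC]
  have hshift : ∀ d : ℝ, R.real (Metric.ball d δ) = ∫ y in Metric.ball 0 δ, ρ (y + d) := by
    intro d
    rw [hRC _ Metric.isOpen_ball.measurableSet]
    have := (measurePreserving_add_right (volume : Measure ℝ) d).setIntegral_preimage_emb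
      (MeasurableEquiv.addRight d).measurableEmbedding ρ (Metric.ball d δ)
    rw [← this]
    congr 2
    ext y
    simp
  rw [hshift (-1), hshift 1, hRC _ Metric.isOpen_ball.measurableSet]
  rw [← integral_add (hρi.comp_add_right _).integrableOn (hρi.comp_add_right _).integrableOn,
    ← integral_const_mul]
  refine setIntegral_mono_on hρi.integrableOn
    (((hρi.comp_add_right _).add (hρi.comp_add_right _)).integrableOn.const_mul _)
    Metric.isOpen_ball.measurableSet ?_
  intro y hy
  rw [Metric.mem_ball, dist_zero_right, Real.norm_eq_abs] at hy
  dsimp only [ρ]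
  rw [hρ, hρ, hρ, ← he]
  have he1 : e ≤ 1 := by
    rw [he]; exact Real.rpow_le_one_of_one_le_of_nonpos hn1 (by linarith)
  have he0 : 0 < e := by rw [he]; positivity
  have hx : |m + y * e| ≤ |m| + 1 := by
    refine (abs_add_le _ _).trans ?_
    rw [abs_mul, abs_of_pos he0]
    have : |y| * e ≤ 1 * 1 := mul_le_mul (by linarith) he1 he0.le zero_le_one
    linarith
  rw [← he] at hsmall
  have key := hsDensity_ineq (β := β) h n hx hsmall hN
  have q1 : m + (y + -1) * e = m + y * e - e := by ring
  have q2 : m + (y + 1) * e = m + y * e + e := by ring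
  rw [q1, q2, ← mul_add, mul_left_comm]
  refine mul_le_mul_of_nonneg_left ?_ hA
  rw [add_comm (hsDensity β h n (m + y * e - e))]
  refine key.trans (le_of_eq ?_)
  congr 3
  have q3 : (n : ℝ) ^ (2 * α - 1) = n * e ^ 2 := by
    have : (2 * α - 1) = 1 + (α - 1) * (2 : ℕ) := by push_cast; ring
    rw [this, Real.rpow_add hn0, Real.rpow_one, Real.rpow_mul_natCast hn0.le, he]
  rw [q3]
  have := Real.cosh_pos (β * (|m| + 1 + M))
  field_simp
  ring

theorem strength_lt {R : ℕ → Measure ℝ} [∀ n, IsProbabilityMeasure (R n)] {s : ℕ → ℝ}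
    (hs : Tendsto s atTop atTop) {l β c : ℝ} (hl : 0 < l) (hc : 0 < c)
    (H : HasLDP R s (fun x => ENNReal.ofReal (l * x ^ 2 / 2)))
    (hb : ∀ᶠ n in atTop, ∀ δ : ℝ, δ ≤ 1 → (R n).real (Metric.ball 0 δ) ≤
      1 / 2 * Real.exp (s n * (β - c) / 2) *
        ((R n).real (Metric.ball (-1) δ) + (R n).real (Metric.ball 1 δ))) : l < β := by
  by_contra hlt
  push Not at hlt
  obtain ⟨δ, hδ0, hδ1, hδ2⟩ : ∃ δ > 0, δ ≤ 1 ∧ l * δ ≤ c / 8 := by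
    refine ⟨min 1 (c / (8 * l)), by positivity, min_le_left _ _, ?_⟩
    calc l * min 1 (c / (8 * l)) ≤ l * (c / (8 * l)) := by gcongr; exact min_le_right _ _
      _ = c / 8 := by field_simp
  have hup : ∀ d : ℝ, |d| = 1 → ∀ᶠ n in atTop,
      (R n).real (Metric.ball d δ) ≤ Real.exp (-(s n * (l * (1 / 2 - δ) - c / 16))) := by
    intro d hd
    have h1 := ldp_upper hs H (Metric.closedBall d δ) Metric.isClosed_closedBall
      (l * (1 / 2 - δ) - c / 16) (l * (1 / 2 - δ)) (by linarith) (fun x hx => by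
        rw [Metric.mem_closedBall, Real.dist_eq] at hx
        have e1 : |d * (x - d)| ≤ δ := by rw [abs_mul, hd, one_mul]; exact hx
        have e2 := neg_le_of_abs_le e1
        have e3 : d ^ 2 = 1 := by rw [← sq_abs, hd]; norm_num
        have e4 : 1 / 2 - δ ≤ x ^ 2 / 2 := by nlinarith [sq_nonneg (x - d)]
        have := mul_le_mul_of_nonneg_left e4 hl.le
        linarith)
    exact h1.mono fun n hn => (measureReal_mono Metric.ball_subset_closedBall).trans hn
  have hlow := ldp_lower hs (fun x => by positivity) H 0 δ hδ0 (c / 16) (by simp; linarith)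
  obtain ⟨n, h1, h2, h3, h4, hsn⟩ := (hlow.and (hb.and ((hup 1 (by simp)).and
    ((hup (-1) (by simp)).and (hs.eventually_gt_atTop 0))))).exists
  have h5 := h2 δ hδ1
  have h6 : Real.exp (-(s n * (c / 16))) ≤
      Real.exp (s n * (β - c) / 2) * Real.exp (-(s n * (l * (1 / 2 - δ) - c / 16))) := by
    have := Real.exp_pos (s n * (β - c) / 2)
    nlinarith
  rw [← Real.exp_add, Real.exp_le_exp] at h6
  have h7 : s n * (c / 16) + (s n * (β - c) / 2 + -(s n * (l * (1 / 2 - δ) - c / 16))) =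
    s n * (c / 8 + (β - l) / 2 - c / 2 + l * δ) := by ring
  have h8 : c / 8 + (β - l) / 2 - c / 2 + l * δ < 0 := by linarith
  have := mul_neg_of_pos_of_neg hsn h8
  linarith
/-- The transfer principle, unconditioned version (Lemma 5.2 (i) of the paper). -/
theorem transfer_principle_unconditioned
    (β : ℝ) (hβ : 0 < β) (ν : Measure ℝ) [IsProbabilityMeasure ν]
    (μ : Measure (ℕ → ℝ)) [IsProbabilityMeasure μ] (hμ : IsProductMeasure ν μ)
    (m : ℝ) (k : ℕ) (l : ℝ) (hmin : IsMinOfType β ν m k l)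
    (α : ℝ) (hα1 : 1 - 1 / (2 * (2 * (k : ℝ) - 1)) < α) (hα2 : α < 1)
    (H : ∀ᵐ h ∂μ, HasLDP
      (fun n => (((gibbsMeasure β h n).prod (gaussianReal 0 (Real.toNNReal β⁻¹))).map
        (fun p : (Fin n → Bool) × ℝ =>
          (mag p.1 - n * m) / (n : ℝ) ^ α + p.2 / (n : ℝ) ^ (α - 1 / 2))))
      (fun n => (n : ℝ) ^ (1 - 2 * (k : ℝ) * (1 - α)))
      (fun x => ENNReal.ofReal (l * x ^ (2 * k) / Nat.factorial (2 * k)))) :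
    ∀ᵐ h ∂μ, HasLDP
      (fun n => (gibbsMeasure β h n).map (fun σ => (mag σ - n * m) / (n : ℝ) ^ α))
      (fun n => (n : ℝ) ^ (1 - 2 * (k : ℝ) * (1 - α)))
      (mdpRate β l k) := by
  obtain ⟨hk, hl, -, -⟩ := hmin
  have hk1 : (1 : ℝ) ≤ k := by exact_mod_cast hk
  have hα0 : 1 / 2 < α := by
    have : 1 / (2 * (2 * (k : ℝ) - 1)) ≤ 1 / 2 := by
      apply one_div_le_one_div_of_le (by norm_num); linarith
    linarith
  have hexp : 0 < 1 - 2 * (k : ℝ) * (1 - α) := by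
    have h2 : 0 < 2 * (k : ℝ) - 1 := by linarith
    have h1 : 1 - α < 1 / (2 * (2 * (k : ℝ) - 1)) := by linarith
    rw [lt_div_iff₀ (by positivity)] at h1
    nlinarith
  have hs : Tendsto (fun n : ℕ => (n : ℝ) ^ (1 - 2 * (k : ℝ) * (1 - α))) atTop atTop :=
    (tendsto_rpow_atTop hexp).comp tendsto_natCast_atTop_atTop
  have ht : Tendsto (fun n : ℕ => (n : ℝ) ^ (2 * α - 1)) atTop atTop :=
    (tendsto_rpow_atTop (by linarith)).comp tendsto_natCast_atTop_atTop
  let Q : ℕ → Measure ℝ := fun n =>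
    (gaussianReal 0 (Real.toNNReal β⁻¹)).map (fun w => w / (n : ℝ) ^ (α - 1 / 2))
  have hQp : ∀ n, IsProbabilityMeasure (Q n) := fun n =>
    Measure.isProbabilityMeasure_map (by fun_prop)
  have hQeq : ∀ n : ℕ, 0 < n → Q n = gaussianReal 0 (vn β α n) := by
    intro n hn
    have hn0 : (0 : ℝ) < n := by exact_mod_cast hn
    dsimp only [Q]
    rw [gaussianReal_map_div_const, zero_div]
    congr 1
    apply NNReal.coe_injective
    unfold vn
    rw [NNReal.coe_div, Real.coe_toNNReal _ (by positivity), Real.coe_toNNReal _ (by positivity)]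
    have : ((n : ℝ) ^ (α - 1 / 2)) ^ 2 = (n : ℝ) ^ (2 * α - 1) := by
      rw [← Real.rpow_mul_natCast hn0.le]
      congr 1
      push_cast; ring
    rw [mul_inv, ← this]
    rfl
  have hQ1 : ∀ δ > 0, ∀ᶠ n in atTop, 1 / 2 ≤ (Q n).real (Metric.ball 0 δ) := by
    intro δ hδ
    have hc : (0 : ℝ) < β * (δ ^ 2 / 2) := by positivity
    filter_upwards [absorb ht 4 hc, eventually_gt_atTop 0] with n h1 hn
    rw [hQeq n hn]
    have h2 := gauss_tail (vn_ne (α := α) hβ hn) hδ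
    rw [vn_inv hβ] at h2
    have h3 := probReal_compl_eq_one_sub (μ := gaussianReal 0 (vn β α n))
      (Metric.isOpen_ball (x := (0 : ℝ)) (ε := δ)).measurableSet
    have e : -(β * (n : ℝ) ^ (2 * α - 1) * (δ ^ 2 / 2)) =
      -((n : ℝ) ^ (2 * α - 1) * (β * (δ ^ 2 / 2))) := by ring
    rw [e] at h2
    simp only [mul_zero, neg_zero, Real.exp_zero] at h1
    linarith
  have hsum : ∀ h : ℕ → ℝ, (fun n : ℕ =>
      (((gibbsMeasure β h n).prod (gaussianReal 0 (Real.toNNReal β⁻¹))).map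
        (fun p : (Fin n → Bool) × ℝ =>
          (mag p.1 - n * m) / (n : ℝ) ^ α + p.2 / (n : ℝ) ^ (α - 1 / 2)))) =
      fun n => sumLaw ((gibbsMeasure β h n).map (fun σ => (mag σ - n * m) / (n : ℝ) ^ α)) (Q n) := by
    intro h
    funext n
    have hg := gibbs_prob β h n
    have hX : Measurable (fun σ : Fin n → Bool => (mag σ - n * m) / (n : ℝ) ^ α) :=
      measurable_of_finite _
    have hZ : Measurable (fun w : ℝ => w / (n : ℝ) ^ (α - 1 / 2)) := by fun_prop
    unfold sumLaw
    dsimp only [Q]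
    rw [Measure.map_prod_map _ _ hX hZ, Measure.map_map (by fun_prop) (hX.prodMap hZ)]
    rfl
  have hPp : ∀ (h : ℕ → ℝ) (n : ℕ), IsProbabilityMeasure
      ((gibbsMeasure β h n).map (fun σ => (mag σ - n * m) / (n : ℝ) ^ α)) := by
    intro h n
    have hg := gibbs_prob β h n
    exact Measure.isProbabilityMeasure_map (measurable_of_finite _).aemeasurable
  simp only [hsum] at H
  by_cases hk' : k = 1
  · subst hk'
    have hse : (1 - 2 * ((1 : ℕ) : ℝ) * (1 - α)) = 2 * α - 1 := by push_cast; ring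
    have hje : (fun x : ℝ => ENNReal.ofReal (l * x ^ (2 * 1) / Nat.factorial (2 * 1))) =
        fun x => ENNReal.ofReal (l * x ^ 2 / 2) := by
      funext x; simp [Nat.factorial]
    rw [hse] at H ⊢
    rw [hje] at H
    obtain ⟨M, hM0, hM⟩ := good_fraction ν μ hμ
    filter_upwards [H, hM] with h H hM
    have hPph := hPp h
    have hlβ : l < β := by
      have hRp : ∀ n, IsProbabilityMeasure ((fun n : ℕ => sumLaw ((gibbsMeasure β h n).map
        (fun σ => (mag σ - n * m) / (n : ℝ) ^ α)) (Q n)) n) := fun n => sumLaw_prob _ _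
      have hC := Real.cosh_pos (β * (|m| + 1 + M))
      refine strength_lt (c := β ^ 2 / (8 * Real.cosh (β * (|m| + 1 + M)) ^ 2)) ht hl
        (by positivity) H ?_
      have hsm : ∀ᶠ n : ℕ in atTop, (β * (n : ℝ) ^ (α - 1)) ^ 2 ≤ 1 := by
        have h1 : Tendsto (fun n : ℕ => (n : ℝ) ^ (-(1 - α))) atTop (𝓝 0) :=
          (tendsto_rpow_neg_atTop (by linarith)).comp tendsto_natCast_atTop_atTop
        have h2 : Tendsto (fun n : ℕ => (β * (n : ℝ) ^ (-(1 - α))) ^ 2) atTop (𝓝 ((β * 0) ^ 2)) :=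
          (h1.const_mul β).pow 2
        rw [neg_sub] at h2
        exact h2.eventually_le_const (by simp)
      filter_upwards [hM, hsm, eventually_gt_atTop 0] with n h1 h2 hn δ hδ
      refine ball_ineq hβ hα2 m h hn h2 h1 hδ _ ?_
      rw [hQeq n hn]
    have hres := transfer_gaussian ht hl hlβ H hQ1
      (by
        intro z η _
        filter_upwards [eventually_gt_atTop 0] with n hn
        rw [hQeq n hn]
        have := gauss_lower (vn_ne (α := α) hβ hn) z η
        rw [vn_inv hβ] at this
        refine le_trans (le_of_eq ?_) this
        congr 2
        ring)
      (by
        intro z η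
        filter_upwards [eventually_gt_atTop 0] with n hn
        rw [hQeq n hn]
        have := gauss_upper (vn_ne (α := α) hβ hn) z η
        rw [vn_inv hβ] at this
        refine this.trans (le_of_eq ?_)
        congr 1
        ring)
    have hI : mdpRate β l 1 = fun x => ENNReal.ofReal (x ^ 2 / (2 * (l⁻¹ - β⁻¹))) := by
      funext x; simp [mdpRate]
    rw [hI]
    exact hres
  · have hI : mdpRate β l k =
        fun x => ENNReal.ofReal (l * x ^ (2 * k) / (Nat.factorial (2 * k))) := by
      funext x; simp [mdpRate, hk']
    rw [hI]
    have hk2 : (2 : ℝ) ≤ k := by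
      have : 2 ≤ k := by omega
      exact_mod_cast this
    filter_upwards [H] with h H
    have hPph := hPp h
    have hf : (0 : ℝ) < Nat.factorial (2 * k) := by exact_mod_cast Nat.factorial_pos _
    refine transfer_negligible hs ?_ (by fun_prop) ?_ H hQ1 ?_
    · intro x
      have : 0 ≤ x ^ (2 * k) := (even_two_mul k).pow_nonneg x
      positivity
    · intro c
      refine ⟨max 1 (c * Nat.factorial (2 * k) / l), fun x hx => ?_⟩
      by_cases hx1 : |x| ≤ 1
      · exact hx1.trans (le_max_left _ _)
      push Not at hx1
      refine le_trans ?_ (le_max_right _ _)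
      rw [le_div_iff₀ hl]
      rw [div_le_iff₀ hf, ← (even_two_mul k).pow_abs] at hx
      have : |x| ≤ |x| ^ (2 * k) := le_self_pow₀ hx1.le (by omega)
      nlinarith
    · intro δ hδ c
      have hr : Tendsto (fun n : ℕ => (n : ℝ) ^ (2 * ((k : ℝ) - 1) * (1 - α))) atTop atTop :=
        (tendsto_rpow_atTop (by
          have : 0 < (k : ℝ) - 1 := by linarith
          have : 0 < 1 - α := by linarith
          positivity)).comp tendsto_natCast_atTop_atTop
      have hb : (0 : ℝ) < β * (δ ^ 2 / 2) := by positivity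
      filter_upwards [absorb hs 2 (show c < c + 1 by linarith),
        (hr.atTop_mul_const hb).eventually_ge_atTop (c + 1), hs.eventually_gt_atTop 0,
        eventually_gt_atTop 0] with n h1 h2 hsn hn
      have hn0 : (0 : ℝ) < n := by exact_mod_cast hn
      rw [hQeq n hn]
      have h3 := gauss_tail (vn_ne (α := α) hβ hn) hδ
      rw [vn_inv hβ] at h3
      refine h3.trans (le_trans ?_ h1)
      refine mul_le_mul_of_nonneg_left (Real.exp_le_exp.2 ?_) (by norm_num)
      have e : (n : ℝ) ^ (2 * α - 1) = (n : ℝ) ^ (1 - 2 * (k : ℝ) * (1 - α)) *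
          (n : ℝ) ^ (2 * ((k : ℝ) - 1) * (1 - α)) := by
        rw [← Real.rpow_add hn0]; congr 1; ring
      rw [e]
      have := mul_le_mul_of_nonneg_left h2 hsn.le
      linarith
end
end

section
/- Let m be a (local or global) minimum of G of type k and strength λ, and suppose ν has a finite second moment. Then for μ-almost every realization h and every α with 1 − 1/(2(2k−1)) < α < 1: for every s ∈ ℝ, n^{2k(1−α)} ( G_n^h(m + s n^{α−1}) − G_n^h(m) ) → λ s^{2k}/(2k)! as n → ∞, and this convergence is uniform on compact subsets of ℝ. -/
open MeasureTheory ProbabilityTheory Real Filter Topology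
open scoped ENNReal NNReal

noncomputable section

lemma rfc_taylor (N : ℕ) : ∀ (f : ℕ → ℝ → ℝ) (C : ℝ), (∀ j x, HasDerivAt (f j) (f (j+1) x) x) →
    (∀ x, |f (N+1) x| ≤ C) → ∀ x t : ℝ,
    |f 0 (x+t) - ∑ j ∈ Finset.range (N+1), f j x * t^j / (Nat.factorial j)| ≤ C * |t|^(N+1) := by
  induction N with
  | zero =>
    intro f C hd hb x t
    have := Convex.norm_image_sub_le_of_norm_hasDerivWithin_le (f := f 0) (f' := f 1) (s := Set.univ)
      (x := x) (y := x + t) (C := C) (fun y _ => (hd 0 y).hasDerivWithinAt) (fun y _ => hb y)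
      convex_univ trivial trivial
    simpa using this
  | succ N ih =>
    intro f C hd hb x t
    have hC : 0 ≤ C := (abs_nonneg _).trans (hb 0)
    set R : ℝ → ℝ := fun u => f 0 (x+u) - ∑ j ∈ Finset.range (N+1+1), f j x * u^j / (Nat.factorial j)
      with hR
    set R' : ℝ → ℝ := fun u => f 1 (x+u) - ∑ j ∈ Finset.range (N+1), f (j+1) x * u^j / (Nat.factorial j)
      with hR'
    have hder : ∀ u, HasDerivAt R (R' u) u := by
      intro u
      have h1 : HasDerivAt (fun u => f 0 (x+u)) (f 1 (x+u)) u := by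
        simpa using (hd 0 (x+u)).comp_const_add x u
      have h2 : HasDerivAt (fun u => ∑ j ∈ Finset.range (N+1+1), f j x * u^j / (Nat.factorial j))
          (∑ j ∈ Finset.range (N+1+1), f j x * (j * u^(j-1)) / (Nat.factorial j)) u := by
        apply HasDerivAt.fun_sum
        intro j _
        exact ((hasDerivAt_pow j u).const_mul _).div_const _
      have h3 : (∑ j ∈ Finset.range (N+1+1), f j x * (j * u^(j-1)) / (Nat.factorial j))
          = ∑ j ∈ Finset.range (N+1), f (j+1) x * u^j / (Nat.factorial j) := by
        rw [Finset.sum_range_succ']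
        simp only [Nat.cast_zero, zero_mul, mul_zero, zero_div, add_zero]
        refine Finset.sum_congr rfl fun j _ => ?_
        rw [Nat.factorial_succ]
        have : (Nat.factorial j : ℝ) ≠ 0 := by positivity
        have : ((j:ℝ)+1) ≠ 0 := by positivity
        push_cast
        field_simp
        try simp
      rw [h3] at h2
      exact h1.sub h2
    have hbd : ∀ u ∈ Set.uIcc 0 t, ‖R' u‖ ≤ C * |t|^(N+1) := by
      intro u hu
      have := ih (fun j => f (j+1)) C (fun j => hd (j+1)) hb x u
      refine this.trans ?_
      have hut : |u| ≤ |t| := by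
        have := Set.abs_sub_left_of_mem_uIcc hu
        simpa using this
      gcongr
    have := Convex.norm_image_sub_le_of_norm_hasDerivWithin_le (f := R) (f' := R')
      (s := Set.uIcc 0 t)
      (x := 0) (y := t) (fun y _ => (hder y).hasDerivWithinAt) hbd
      (convex_uIcc _ _) Set.left_mem_uIcc Set.right_mem_uIcc
    have hR0 : R 0 = 0 := by
      simp only [hR]
      rw [Finset.sum_range_succ']
      simp
    rw [hR0, sub_zero, sub_zero] at this
    rw [pow_succ, ← mul_assoc]
    exact this

/-- polynomials in tanh -/
def rfcP : ℕ → Polynomial ℝ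
  | 0 => Polynomial.X
  | (j+1) => Polynomial.derivative (rfcP j) * (1 - Polynomial.X ^ 2)

/-- iterated derivatives of log cosh -/
def rfcg : ℕ → ℝ → ℝ
  | 0 => fun y => Real.log (Real.cosh y)
  | (j+1) => fun y => (rfcP j).eval (Real.tanh y)

lemma rfc_tanh (y : ℝ) : HasDerivAt Real.tanh (1 - Real.tanh y ^ 2) y := by
  have hc : Real.cosh y ≠ 0 := (Real.cosh_pos y).ne'
  have h := (Real.hasDerivAt_sinh y).div (Real.hasDerivAt_cosh y) hc
  have e : Real.tanh = Real.sinh / Real.cosh := by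
    funext z; simp [Real.tanh_eq_sinh_div_cosh]
  rw [e]
  refine h.congr_deriv ?_
  have := Real.cosh_sq y
  simp only [Pi.div_apply]
  field_simp

lemma rfcg_deriv (j : ℕ) (y : ℝ) : HasDerivAt (rfcg j) (rfcg (j+1) y) y := by
  cases j with
  | zero =>
    have h := (Real.hasDerivAt_cosh y).log (Real.cosh_pos y).ne'
    simp only [rfcg, rfcP, Polynomial.eval_X]
    rw [Real.tanh_eq_sinh_div_cosh]
    exact h
  | succ j =>
    have h := ((rfcP j).hasDerivAt (Real.tanh y)).comp y (rfc_tanh y)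
    refine HasDerivAt.congr_deriv (f := rfcg (j+1)) h ?_
    simp [rfcg, rfcP]

lemma rfcg_cont (j : ℕ) : Continuous (rfcg j) :=
  continuous_iff_continuousAt.2 fun y => (rfcg_deriv j y).continuousAt

lemma rfcg_bdd (j : ℕ) : ∃ C : ℝ, ∀ y, |rfcg (j+1) y| ≤ C := by
  obtain ⟨C, hC⟩ := (isCompact_Icc (a := (-1:ℝ)) (b := 1)).exists_bound_of_continuousOn
    (f := fun t => (rfcP j).eval t) (rfcP j).continuous.continuousOn
  exact ⟨C, fun y => hC _ ⟨(Real.neg_one_lt_tanh y).le, (Real.tanh_lt_one y).le⟩⟩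

lemma rfcg_zero_abs (y : ℝ) : |rfcg 0 y| ≤ |y| := by
  have h1 := Real.one_le_cosh y
  have h2 : Real.cosh y ≤ Real.exp |y| := by
    rw [Real.cosh_eq]
    have := Real.exp_le_exp.2 (le_abs_self y)
    have := Real.exp_le_exp.2 (neg_le_abs y)
    linarith
  simp only [rfcg]
  rw [abs_of_nonneg (Real.log_nonneg h1)]
  exact (Real.log_le_log (by linarith) h2).trans (by simp)

lemma rfcg_integrable (β : ℝ) (ν : Measure ℝ) [IsProbabilityMeasure ν]
    (hmom : Integrable (fun x : ℝ => x ^ 2) ν) (j : ℕ) (x : ℝ) :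
    Integrable (fun h => rfcg j (β * (x + h))) ν := by
  have hm : AEStronglyMeasurable (fun h => rfcg j (β * (x + h))) ν :=
    ((rfcg_cont j).comp (by fun_prop)).aestronglyMeasurable
  cases j with
  | zero =>
    refine Integrable.mono' (g := fun h => |β| * (|x| + (1 + h^2))) ?_ hm (ae_of_all _ fun h => ?_)
    · exact (((integrable_const _).add ((integrable_const _).add hmom))).const_mul _
    · refine (rfcg_zero_abs _).trans ?_
      rw [abs_mul]
      gcongr
      refine (abs_add_le _ _).trans ?_
      gcongr
      rw [abs_le]
      constructor <;> nlinarith [sq_nonneg (h-1), sq_nonneg (h+1)]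
  | succ j =>
    obtain ⟨C, hC⟩ := rfcg_bdd j
    exact Integrable.mono' (integrable_const C) hm (ae_of_all _ fun h => hC _)

/-- derivatives of the quadratic part -/
def rfcq (β : ℝ) : ℕ → ℝ → ℝ
  | 0 => fun x => β / 2 * x ^ 2
  | 1 => fun x => β * x
  | 2 => fun _ => β
  | _ => fun _ => 0

lemma rfcq_deriv (β : ℝ) (j : ℕ) (x : ℝ) : HasDerivAt (rfcq β j) (rfcq β (j+1) x) x := by
  match j with
  | 0 =>
    have := (hasDerivAt_pow 2 x).const_mul (β / 2)
    refine HasDerivAt.congr_deriv (f := rfcq β 0) this ?_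
    simp [rfcq]; ring
  | 1 => simpa [rfcq] using (hasDerivAt_id x).const_mul β
  | 2 => exact hasDerivAt_const x β
  | (j+3) => exact hasDerivAt_const x 0

/-- derivatives of G -/
def rfcD (β : ℝ) (ν : Measure ℝ) (j : ℕ) (x : ℝ) : ℝ :=
  rfcq β j x - β ^ j * ∫ h, rfcg j (β * (x + h)) ∂ν

/-- derivatives of Gn -/
def rfcDn (β : ℝ) (h : ℕ → ℝ) (n : ℕ) (j : ℕ) (x : ℝ) : ℝ :=
  rfcq β j x - β ^ j * ((1 / n) * ∑ i : Fin n, rfcg j (β * (x + h i)))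

lemma rfcg_comp_deriv (β : ℝ) (j : ℕ) (x h : ℝ) :
    HasDerivAt (fun x => rfcg j (β * (x + h))) (β * rfcg (j+1) (β * (x + h))) x := by
  have h1 : HasDerivAt (fun x => β * (x + h)) β x := by
    simpa using ((hasDerivAt_id x).add_const h).const_mul β
  have := (rfcg_deriv j (β * (x+h))).comp x h1
  rw [mul_comm]
  exact this

lemma rfcD_deriv (β : ℝ) (ν : Measure ℝ) [IsProbabilityMeasure ν]
    (hmom : Integrable (fun x : ℝ => x ^ 2) ν) (j : ℕ) (x : ℝ) :
    HasDerivAt (rfcD β ν j) (rfcD β ν (j+1) x) x := by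
  obtain ⟨C, hC⟩ := rfcg_bdd j
  have h := (hasDerivAt_integral_of_dominated_loc_of_deriv_le (μ := ν)
    (F := fun x h => rfcg j (β * (x + h))) (F' := fun x h => β * rfcg (j+1) (β * (x + h)))
    (x₀ := x) (s := Set.univ) (bound := fun _ => |β| * C) univ_mem
    (Eventually.of_forall fun y => (rfcg_integrable β ν hmom j y).aestronglyMeasurable)
    (rfcg_integrable β ν hmom j x)
    ((rfcg_integrable β ν hmom (j+1) x).aestronglyMeasurable.const_mul β)
    (ae_of_all _ fun h y _ => by
      rw [Real.norm_eq_abs, abs_mul]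
      exact mul_le_mul_of_nonneg_left (hC _) (abs_nonneg _))
    (integrable_const _)
    (ae_of_all _ fun h y _ => rfcg_comp_deriv β j y h)).2
  rw [integral_const_mul] at h
  have := (rfcq_deriv β j x).sub (h.const_mul (β ^ j))
  rw [← mul_assoc, ← pow_succ] at this
  exact this

lemma rfcDn_deriv (β : ℝ) (h : ℕ → ℝ) (n : ℕ) (j : ℕ) (x : ℝ) :
    HasDerivAt (rfcDn β h n j) (rfcDn β h n (j+1) x) x := by
  have h1 : HasDerivAt (fun x => ∑ i : Fin n, rfcg j (β * (x + h i)))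
      (∑ i : Fin n, β * rfcg (j+1) (β * (x + h i))) x :=
    HasDerivAt.fun_sum fun i _ => rfcg_comp_deriv β j x (h i)
  have := (rfcq_deriv β j x).sub ((h1.const_mul (1 / (n:ℝ))).const_mul (β ^ j))
  refine HasDerivAt.congr_deriv (f := rfcDn β h n j) this ?_
  unfold rfcDn
  rw [← Finset.mul_sum]
  ring

lemma rfcD_iter (β : ℝ) (ν : Measure ℝ) [IsProbabilityMeasure ν]
    (hmom : Integrable (fun x : ℝ => x ^ 2) ν) (j : ℕ) :
    iteratedDeriv j (G β ν) = rfcD β ν j := by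
  induction j with
  | zero => funext x; simp [rfcD, G, rfcq, rfcg]
  | succ j ih =>
    rw [iteratedDeriv_succ, ih]
    funext x
    exact (rfcD_deriv β ν hmom j x).deriv

lemma rfcDn_bdd (β : ℝ) (j : ℕ) (hj : 2 ≤ j) : ∃ C : ℝ, 0 ≤ C ∧ ∀ h n x, |rfcDn β h n (j+1) x| ≤ C := by
  obtain ⟨C, hC⟩ := rfcg_bdd j
  have hC0 : 0 ≤ C := (abs_nonneg _).trans (hC 0)
  refine ⟨|β|^(j+1) * C, by positivity, fun h n x => ?_⟩
  obtain ⟨i, rfl⟩ := Nat.exists_eq_add_of_le' hj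
  have e : rfcq β (i+2+1) x = 0 := rfl
  rw [rfcDn, e, zero_sub, abs_neg, abs_mul, abs_pow]
  gcongr
  rw [abs_mul]
  have : |∑ i_1 : Fin n, rfcg (i+2+1) (β * (x + h i_1))| ≤ n * C := by
    refine (Finset.abs_sum_le_sum_abs _ _).trans ?_
    refine (Finset.sum_le_sum fun _ _ => hC _).trans ?_
    simp
  rcases Nat.eq_zero_or_pos n with rfl | hn
  · simpa using hC0
  · have hn' : (0:ℝ) < n := by exact_mod_cast hn
    rw [abs_of_pos (by positivity), div_mul_eq_mul_div, div_le_iff₀ hn']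
    linarith

lemma rfc_prod (ν : Measure ℝ) [IsProbabilityMeasure ν]
    (μ : Measure (ℕ → ℝ)) (hμ : IsProductMeasure ν μ) :
    μ = Measure.infinitePi (fun _ => ν) := by
  classical
  apply Measure.eq_infinitePi
  intro s t ht
  obtain ⟨n, hn⟩ : ∃ n, s ⊆ Finset.range n := s.exists_nat_subset_range
  set t' : ℕ → Set ℝ := fun i => if i ∈ s then t i else Set.univ with ht'
  have hm : ∀ i, MeasurableSet (t' i) := by
    intro i; simp only [ht']; split_ifs; exacts [ht i, MeasurableSet.univ]
  have hpre : Set.pi (↑s) t = (fun h (i : Fin n) => h (i : ℕ)) ⁻¹'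
      (Set.pi Set.univ (fun i : Fin n => t' i)) := by
    ext h
    simp only [Set.mem_pi, Set.mem_preimage, Set.mem_univ, forall_true_left, ht', Finset.mem_coe]
    constructor
    · intro H i
      split_ifs with hi
      · exact H _ hi
      · trivial
    · intro H i hi
      have := H ⟨i, Finset.mem_range.1 (hn hi)⟩
      simpa [hi] using this
  rw [hpre, ← Measure.map_apply (f := fun (h : ℕ → ℝ) (i : Fin n) => h (i : ℕ)) (by fun_prop) (MeasurableSet.univ_pi fun i => hm i), hμ n,
    Measure.pi_pi]
  rw [Fin.prod_univ_eq_prod_range (fun i => ν (t' i)) n]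
  rw [← Finset.prod_subset hn]
  · exact Finset.prod_congr rfl fun i hi => by simp [ht', hi]
  · intro i _ hi
    simp [ht', hi]

lemma rfc_hoeff (ν : Measure ℝ) [IsProbabilityMeasure ν] (φ : ℝ → ℝ) (hφ : Measurable φ) (B : ℝ)
    (hB : 0 < B) (hb : ∀ x, |φ x| ≤ B) :
    ∀ᵐ h ∂(Measure.infinitePi (fun _ : ℕ => ν)), ∀ᶠ n : ℕ in atTop,
      ∑ i ∈ Finset.range n, (φ (h i) - ∫ x, φ x ∂ν) < 2 * B * √(n * Real.log n) := by
  set P := Measure.infinitePi (fun _ : ℕ => ν)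
  have hint : ∀ i : ℕ, ∫ h, φ (h i) ∂P = ∫ x, φ x ∂ν := by
    intro i
    rw [← Measure.infinitePi_map_eval (fun _ : ℕ => ν) i, integral_map (measurable_pi_apply i).aemeasurable
      hφ.aestronglyMeasurable]
  have hind : iIndepFun (fun (i : ℕ) (h : ℕ → ℝ) => φ (h i) - ∫ x, φ x ∂ν) P :=
    iIndepFun_infinitePi (P := fun _ : ℕ => ν) (X := fun _ y => φ y - ∫ x, φ x ∂ν)
      (fun _ => hφ.sub_const _)
  have hsub : ∀ i : ℕ, HasSubgaussianMGF (fun h : ℕ → ℝ => φ (h i) - ∫ x, φ x ∂ν)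
      ((‖B - (-B)‖₊ / 2) ^ 2) P := by
    intro i
    have := hasSubgaussianMGF_of_mem_Icc (μ := P) (X := fun h : ℕ → ℝ => φ (h i)) (a := -B) (b := B)
      (hφ.comp (measurable_pi_apply i)).aemeasurable (ae_of_all _ fun h => abs_le.1 (hb _))
    rwa [hint] at this
  have hc : (((‖B - (-B)‖₊ / 2) ^ 2 : ℝ≥0) : ℝ) = B ^ 2 := by
    push_cast
    rw [Real.norm_eq_abs, abs_of_pos (by linarith)]
    ring
  set S : ℕ → Set (ℕ → ℝ) := fun n =>
    {h | 2 * B * √(n * Real.log n) ≤ ∑ i ∈ Finset.range n, (φ (h i) - ∫ x, φ x ∂ν)} with hS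
  have hle : ∀ n : ℕ, 1 ≤ n → P.real (S n) ≤ 1 / (n:ℝ)^2 := by
    intro n hn
    have hn' : (0:ℝ) < n := by exact_mod_cast hn
    have hlog : 0 ≤ Real.log n := Real.log_natCast_nonneg n
    have := HasSubgaussianMGF.measure_sum_range_ge_le_of_iIndepFun hind (n := n)
      (fun i _ => hsub i) (ε := 2 * B * √(n * Real.log n)) (by positivity)
    refine this.trans (le_of_eq ?_)
    rw [hc, mul_pow, Real.sq_sqrt (by positivity)]
    have : -((2 * B)^2 * (n * Real.log n)) / (2 * n * B^2) = -Real.log ((n:ℝ)^2) := by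
      rw [Real.log_pow]
      field_simp
      push_cast; ring
    rw [this, Real.exp_neg, Real.exp_log (by positivity), one_div]
  have hsum : ∑' n, P (S n) ≠ ∞ := by
    have h1 : Summable (fun n => P.real (S n)) := by
      rw [← summable_nat_add_iff 1]
      refine Summable.of_nonneg_of_le (fun _ => measureReal_nonneg) (fun n => hle (n+1) (by omega)) ?_
      exact (summable_nat_add_iff 1).2 (Real.summable_one_div_nat_pow.2 one_lt_two)
    have := h1.tsum_ofReal_ne_top
    simpa [Measure.real, ENNReal.ofReal_toReal (measure_ne_top _ _)] using this
  filter_upwards [ae_eventually_notMem hsum] with h hh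
  filter_upwards [hh] with n hn
  simpa [hS] using hn

lemma rfc_lln (ν : Measure ℝ) [IsProbabilityMeasure ν] (φ : ℝ → ℝ) (hφ : Measurable φ) (B : ℝ)
    (hb : ∀ x, |φ x| ≤ B) :
    ∀ᵐ h ∂(Measure.infinitePi (fun _ : ℕ => ν)), ∀ γ : ℝ, γ < 1 / 2 →
      Tendsto (fun n : ℕ => (n:ℝ)^γ * |(1/n) * ∑ i : Fin n, φ (h i) - ∫ x, φ x ∂ν|) atTop (𝓝 0) := by
  have hB : 0 < |B| + 1 := by positivity
  have hb' : ∀ x, |φ x| ≤ |B| + 1 := fun x => (hb x).trans (by linarith [le_abs_self B])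
  have h1 := rfc_hoeff ν φ hφ (|B|+1) hB hb'
  have h2 := rfc_hoeff ν (fun x => - φ x) hφ.neg (|B|+1) hB (by simpa using hb')
  filter_upwards [h1, h2] with h h1 h2 γ hγ
  have hlim : Tendsto (fun n : ℕ => (2 * (|B|+1)) * (√(Real.log n / (n:ℝ)^(1 - 2*γ)))) atTop (𝓝 0) := by
    have : Tendsto (fun x : ℝ => Real.log x / x^(1 - 2*γ)) atTop (𝓝 0) :=
      (isLittleO_log_rpow_atTop (by linarith)).tendsto_div_nhds_zero
    have := (this.comp tendsto_natCast_atTop_atTop).sqrt.const_mul (2 * (|B|+1))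
    simpa using this
  refine squeeze_zero' (Eventually.of_forall fun n => by positivity) ?_ hlim
  filter_upwards [h1, h2, eventually_ge_atTop 1] with n h1 h2 hn
  have hn' : (0:ℝ) < n := by exact_mod_cast hn
  have hlog : 0 ≤ Real.log n := Real.log_natCast_nonneg n
  set S := ∑ i ∈ Finset.range n, (φ (h i) - ∫ x, φ x ∂ν) with hS
  have h2' : -S < 2 * (|B|+1) * √(n * Real.log n) := by
    rw [integral_neg] at h2
    convert h2 using 1
    rw [hS, ← Finset.sum_neg_distrib]
    exact Finset.sum_congr rfl fun _ _ => by ring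
  have e : (1/(n:ℝ)) * ∑ i : Fin n, φ (h i) - ∫ x, φ x ∂ν = S / n := by
    rw [hS, Finset.sum_sub_distrib, Fin.sum_univ_eq_sum_range (fun i => φ (h i)) n]
    simp
    field_simp
  have hSa : |S| ≤ 2 * (|B|+1) * √(n * Real.log n) := abs_le.2 ⟨by linarith, h1.le⟩
  rw [e, abs_div, abs_of_pos hn']
  have e2 : √(Real.log n / (n:ℝ)^(1 - 2*γ)) = (n:ℝ)^γ * (√(n * Real.log n) / n) := by
    rw [← Real.sqrt_sq (show 0 ≤ (n:ℝ)^γ * (√(n * Real.log n) / n) by positivity)]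
    congr 1
    rw [mul_pow, div_pow, Real.sq_sqrt (by positivity), Real.rpow_sub hn', Real.rpow_one,
      two_mul γ, Real.rpow_add hn']
    have : (n:ℝ)^γ ≠ 0 := by positivity
    field_simp
  rw [e2]
  calc (n:ℝ)^γ * (|S| / n) ≤ (n:ℝ)^γ * ((2 * (|B|+1) * √(n * Real.log n)) / n) := by gcongr
    _ = _ := by ring

/-- Uniform convergence of the rescaled increments of `G_n^h`
(Lemma 5.4 (i) of the paper). -/
theorem rescaled_increments_convergence
    (β : ℝ) (hβ : 0 < β) (ν : Measure ℝ) [IsProbabilityMeasure ν]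
    (hmom : Integrable (fun x : ℝ => x ^ 2) ν)
    (μ : Measure (ℕ → ℝ)) [IsProbabilityMeasure μ] (hμ : IsProductMeasure ν μ)
    (m : ℝ) (k : ℕ) (l : ℝ) (hmin : IsMinOfType β ν m k l) :
    ∀ᵐ h ∂μ, ∀ α : ℝ, 1 - 1 / (2 * (2 * (k : ℝ) - 1)) < α → α < 1 →
      (∀ s : ℝ, Tendsto (fun n : ℕ => (n : ℝ) ^ (2 * (k : ℝ) * (1 - α)) *
          (Gn β h n (m + s * (n : ℝ) ^ (α - 1)) - Gn β h n m)) atTop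
        (𝓝 (l * s ^ (2 * k) / Nat.factorial (2 * k)))) ∧
      (∀ K : Set ℝ, IsCompact K →
        TendstoUniformlyOn (fun n s => ((n : ℕ) : ℝ) ^ (2 * (k : ℝ) * (1 - α)) *
            (Gn β h n (m + s * (n : ℝ) ^ (α - 1)) - Gn β h n m))
          (fun s => l * s ^ (2 * k) / Nat.factorial (2 * k)) atTop K) := by
  rw [rfc_prod ν μ hμ]
  obtain ⟨hk, hl, hz, hlam⟩ := hmin
  have hlln : ∀ᵐ h ∂(Measure.infinitePi (fun _ : ℕ => ν)), ∀ j : ℕ, ∀ γ : ℝ, γ < 1 / 2 →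
      Tendsto (fun n : ℕ => (n:ℝ)^γ * |(1/n) * ∑ i : Fin n, rfcg (j+1) (β * (m + h i))
        - ∫ x, rfcg (j+1) (β * (m + x)) ∂ν|) atTop (𝓝 0) := by
    rw [ae_all_iff]
    intro j
    obtain ⟨C, hC⟩ := rfcg_bdd j
    exact rfc_lln ν (fun y => rfcg (j+1) (β * (m + y)))
      ((rfcg_cont (j+1)).comp (by fun_prop)).measurable C (fun _ => hC _)
  filter_upwards [hlln] with h hh α hα1 hα2
  obtain ⟨C, hC0, hC⟩ := rfcDn_bdd β (2 * k) (by omega)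
  have hk1 : (1:ℝ) ≤ k := by exact_mod_cast hk
  set γ : ℝ := (2 * (k:ℝ) - 1) * (1 - α) with hγ
  have hγ2 : γ < 1 / 2 := by
    have h1 : 1 - α < 1 / (2 * (2 * (k : ℝ) - 1)) := by linarith
    rw [lt_div_iff₀ (by linarith)] at h1
    rw [hγ]; linarith
  set E : ℕ → ℕ → ℝ := fun n j => |rfcDn β h n (j+1) m - rfcD β ν (j+1) m| with hE
  have hElim : ∀ j, Tendsto (fun n : ℕ => (n:ℝ)^γ * E n j) atTop (𝓝 0) := by
    intro j
    have := (hh j γ hγ2).const_mul (|β|^(j+1))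
    rw [mul_zero] at this
    refine this.congr fun n => ?_
    simp only [hE, rfcDn, rfcD]
    rw [sub_sub_sub_cancel_left, ← mul_sub, abs_mul, abs_pow, abs_sub_comm (∫ x, _ ∂ν)]
    ring
  have key : ∀ R : ℝ, ∀ n : ℕ, 1 ≤ n → ∀ s : ℝ, |s| ≤ R →
      |(n : ℝ) ^ (2 * (k : ℝ) * (1 - α)) * (Gn β h n (m + s * (n : ℝ) ^ (α - 1)) - Gn β h n m)
        - l * s ^ (2 * k) / Nat.factorial (2 * k)| ≤
      ∑ j ∈ Finset.range (2 * k), ((n:ℝ)^γ * E n j) * R^(j+1)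
        + C * R^(2*k+1) * (n:ℝ)^(-(1-α)) := by
    intro R n hn s hs
    have hn' : (0:ℝ) < n := by exact_mod_cast hn
    have hn1 : (1:ℝ) ≤ n := by exact_mod_cast hn
    have hR : 0 ≤ R := (abs_nonneg s).trans hs
    set r : ℝ := (n:ℝ)^(1-α) with hr
    have hr1 : 1 ≤ r := Real.one_le_rpow hn1 (by linarith)
    have hr0 : 0 < r := by linarith
    have e1 : (n : ℝ) ^ (2 * (k : ℝ) * (1 - α)) = r^(2*k) := by
      rw [hr, ← Real.rpow_natCast, ← Real.rpow_mul hn'.le]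
      congr 1; push_cast; ring
    have e2 : (n : ℝ) ^ (α - 1) = r⁻¹ := by
      rw [hr, ← Real.rpow_neg hn'.le]; congr 1; ring
    have e3 : (n : ℝ) ^ (-(1 - α)) = r⁻¹ := by
      rw [hr, ← Real.rpow_neg hn'.le]
    have e4 : (n:ℝ)^γ * r = r^(2*k) := by
      rw [← e1, hr, ← Real.rpow_add hn']; congr 1; rw [hγ]; ring
    rw [e1, e2, e3]
    set t : ℝ := s * r⁻¹ with ht
    have hst : s = r * t := by rw [ht]; field_simp
    have hT := rfc_taylor (2*k) (rfcDn β h n) C (rfcDn_deriv β h n) (hC h n) m t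
    have hG : ∀ x, rfcDn β h n 0 x = Gn β h n x := by
      intro x; simp [rfcDn, Gn, rfcq, rfcg]
    rw [Finset.sum_range_succ', hG, hG] at hT
    simp only [pow_zero, Nat.factorial_zero, Nat.cast_one, mul_one, div_one] at hT
    have hD : ∑ j ∈ Finset.range (2*k), rfcD β ν (j+1) m * t^(j+1) / (Nat.factorial (j+1))
        = l * t^(2*k) / Nat.factorial (2*k) := by
      rw [Finset.sum_eq_single (2*k-1)]
      · rw [Nat.sub_add_cancel (by omega), ← rfcD_iter β ν hmom, hlam]
      · intro j hj hne
        have := Finset.mem_range.1 hj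
        rw [← rfcD_iter β ν hmom, hz (j+1) (by omega) (by omega)]
        simp
      · intro hne
        exact absurd (Finset.mem_range.2 (by omega)) hne
    have hS : |∑ j ∈ Finset.range (2*k), (rfcDn β h n (j+1) m - rfcD β ν (j+1) m) * t^(j+1)
        / (Nat.factorial (j+1))| * r^(2*k) ≤ ∑ j ∈ Finset.range (2 * k), ((n:ℝ)^γ * E n j) * R^(j+1) := by
      refine (mul_le_mul_of_nonneg_right (Finset.abs_sum_le_sum_abs _ _) (by positivity)).trans ?_
      rw [Finset.sum_mul]
      refine Finset.sum_le_sum fun j _ => ?_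
      rw [abs_div, abs_mul, Nat.abs_cast, abs_pow]
      have hf : (1:ℝ) ≤ Nat.factorial (j+1) := by exact_mod_cast Nat.factorial_pos _
      have htt : |t| * r = |s| := by
        rw [ht, abs_mul, abs_of_pos (inv_pos.2 hr0), inv_mul_cancel_right₀ hr0.ne']
      have h1 : |t|^(j+1) * r ≤ R^(j+1) := by
        calc |t|^(j+1) * r ≤ |t|^(j+1) * r^(j+1) := by
              gcongr; exact le_self_pow₀ hr1 (by omega)
          _ = |s|^(j+1) := by rw [← mul_pow, htt]
          _ ≤ _ := by gcongr
      calc _ ≤ E n j * |t|^(j+1) * r^(2*k) := by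
            refine mul_le_mul_of_nonneg_right ?_ (by positivity)
            exact div_le_self (by positivity) hf
        _ = ((n:ℝ)^γ * E n j) * (|t|^(j+1) * r) := by rw [← e4]; ring
        _ ≤ _ := by
          refine mul_le_mul_of_nonneg_left h1 ?_
          have : 0 ≤ E n j := abs_nonneg _
          positivity
    have hRem : C * |t|^(2*k+1) * r^(2*k) ≤ C * R^(2*k+1) * r⁻¹ := by
      have : |t| = |s| * r⁻¹ := by rw [ht, abs_mul, abs_of_pos (inv_pos.2 hr0)]
      rw [this, mul_pow]
      calc _ = C * |s|^(2*k+1) * r⁻¹ := by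
            rw [pow_succ r⁻¹, inv_pow]; field_simp
        _ ≤ _ := by gcongr
    have hsplit : r^(2*k) * (Gn β h n (m+t) - Gn β h n m) - l * s^(2*k) / Nat.factorial (2*k)
        = (Gn β h n (m + t) - (∑ j ∈ Finset.range (2*k), rfcDn β h n (j+1) m * t^(j+1)
            / (Nat.factorial (j+1)) + Gn β h n m)) * r^(2*k)
          + (∑ j ∈ Finset.range (2*k), (rfcDn β h n (j+1) m - rfcD β ν (j+1) m) * t^(j+1)
        / (Nat.factorial (j+1))) * r^(2*k) := by
      simp only [sub_mul, sub_div, Finset.sum_sub_distrib]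
      rw [hD, hst, mul_pow]
      ring
    rw [hsplit]
    refine (abs_add_le _ _).trans ?_
    rw [abs_mul, abs_mul, abs_of_pos (pow_pos hr0 (2*k))]
    have := mul_le_mul_of_nonneg_right hT (pow_pos hr0 (2*k)).le
    linarith
  have hblim : ∀ R : ℝ, Tendsto (fun n : ℕ => ∑ j ∈ Finset.range (2 * k), ((n:ℝ)^γ * E n j) * R^(j+1)
        + C * R^(2*k+1) * (n:ℝ)^(-(1-α))) atTop (𝓝 0) := by
    intro R
    have h1 : Tendsto (fun n : ℕ => ∑ j ∈ Finset.range (2 * k), ((n:ℝ)^γ * E n j) * R^(j+1))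
        atTop (𝓝 (∑ j ∈ Finset.range (2 * k), 0 * R^(j+1))) :=
      tendsto_finsetSum _ fun j _ => (hElim j).mul_const _
    have h2 := ((tendsto_rpow_neg_atTop (show 0 < 1 - α by linarith)).comp
      tendsto_natCast_atTop_atTop).const_mul (C * R^(2*k+1))
    simpa using h1.add h2
  have hunif : ∀ K : Set ℝ, IsCompact K →
        TendstoUniformlyOn (fun n s => ((n : ℕ) : ℝ) ^ (2 * (k : ℝ) * (1 - α)) *
            (Gn β h n (m + s * (n : ℝ) ^ (α - 1)) - Gn β h n m))
          (fun s => l * s ^ (2 * k) / Nat.factorial (2 * k)) atTop K := by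
    intro K hK
    obtain ⟨R, hR⟩ := hK.isBounded.exists_norm_le
    rw [Metric.tendstoUniformlyOn_iff]
    intro ε hε
    filter_upwards [(hblim R).eventually_lt_const hε, eventually_ge_atTop 1] with n h1 h2 s hs
    rw [dist_comm, Real.dist_eq]
    exact (key R n h2 s (hR s hs)).trans_lt h1
  exact ⟨fun s => (hunif {s} isCompact_singleton).tendsto_at (Set.mem_singleton s), hunif⟩
end
end

section
/- Let m be a (local or global) minimum of G of type k and strength λ, and suppose ν has a finite second moment. Then for μ-almost every realization h and every α with 1 − 1/(2(2k−1)) < α < 1 there exists δ > 0 such that for all sufficiently large n, n^{2k(1−α)} ( G_n^h(m + s n^{α−1}) − G_n^h(m) ) ≥ P_{2k}(s) for all s ∈ [−δ n^{1−α}, δ n^{1−α}], where P_{2k}(s) = (λ/(2·(2k)!)) s^{2k} − Σ_{i=1}^{2k−1} |s|^i. -/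
open MeasureTheory ProbabilityTheory Real Filter Topology
open scoped ENNReal NNReal

noncomputable section

lemma prod_map_coord {ν : Measure ℝ} [IsProbabilityMeasure ν] {μ : Measure (ℕ → ℝ)}
    (hμ : IsProductMeasure ν μ) (i : ℕ) : μ.map (fun h => h i) = ν := by
  have h1 := hμ (i + 1)
  have h2 : μ.map (fun h => h i) =
      (μ.map (fun h (j : Fin (i+1)) => h (j : ℕ))).map (Function.eval (Fin.last i)) := by
    rw [Measure.map_map (by fun_prop) (by fun_prop)]
    rfl
  rw [h2, h1]
  exact (measurePreserving_eval (fun _ : Fin (i+1) => ν) (Fin.last i)).map_eq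

lemma prod_indep {ν : Measure ℝ} [IsProbabilityMeasure ν] {μ : Measure (ℕ → ℝ)}
    [IsProbabilityMeasure μ]
    (hμ : IsProductMeasure ν μ) (n : ℕ) : iIndepFun (fun (i : Fin n) (h : ℕ → ℝ) => h i) μ := by
  rw [iIndepFun_iff_map_fun_eq_pi_map (fun i => (measurable_pi_apply _).aemeasurable)]
  rw [hμ n]
  congr 1
  funext i
  exact (prod_map_coord hμ i).symm

lemma one_sided {ν : Measure ℝ} [IsProbabilityMeasure ν] {μ : Measure (ℕ → ℝ)}
    [IsProbabilityMeasure μ] (hμ : IsProductMeasure ν μ) (f : ℝ → ℝ) (hf : Measurable f)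
    (C : ℝ) (hC : 0 < C) (hfC : ∀ x, |f x| ≤ C) :
    ∀ᵐ h ∂μ, ∀ᶠ n : ℕ in atTop,
      ∑ i : Fin n, (f (h i) - ∫ x, f x ∂ν) < 2 * C * √(n * Real.log n) := by
  have key : ∀ n : ℕ, μ {h | 2 * C * √(n * Real.log n) ≤ ∑ i : Fin n, (f (h i) - ∫ x, f x ∂ν)}
      ≤ ENNReal.ofReal (1 / (n : ℝ) ^ 2) + if n = 0 then 1 else 0 := by
    intro n
    rcases Nat.eq_zero_or_pos n with hn | hn
    · simp only [hn, if_true]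
      exact prob_le_one.trans le_add_self
    have hsub : ∀ i : Fin n, HasSubgaussianMGF
        (fun h : ℕ → ℝ => f (h i) - ∫ x, f x ∂ν) ((‖C - (-C)‖₊ / 2) ^ 2) μ := by
      intro i
      have := hasSubgaussianMGF_of_mem_Icc (μ := μ) (X := fun h : ℕ → ℝ => f (h i))
        (a := -C) (b := C) (hf.comp (measurable_pi_apply _)).aemeasurable (ae_of_all _ fun h => abs_le.mp (hfC _))
      have he : ∫ h, f (h i) ∂μ = ∫ x, f x ∂ν := by
        rw [← integral_map (φ := fun h : ℕ → ℝ => h i) (measurable_pi_apply _).aemeasurable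
          hf.aestronglyMeasurable, prod_map_coord hμ]
      rwa [he] at this
    have hind : iIndepFun (fun (i : Fin n) (h : ℕ → ℝ) => f (h i) - ∫ x, f x ∂ν) μ :=
      (prod_indep hμ n).comp (fun _ x => f x - ∫ x, f x ∂ν) (fun _ => by fun_prop)
    have := HasSubgaussianMGF.measure_sum_ge_le_of_iIndepFun hind (s := Finset.univ)
      (c := fun _ => (‖C - (-C)‖₊ / 2) ^ 2) (fun i _ => hsub i)
      (ε := 2 * C * √(n * Real.log n)) (by positivity)
    have hn' : (0:ℝ) < n := by exact_mod_cast hn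
    have hl : 0 ≤ Real.log n := Real.log_natCast_nonneg n
    have hexp : -(2 * C * √(n * Real.log n)) ^ 2 /
        (2 * ∑ i : Fin n, (((‖C - (-C)‖₊ / 2) ^ 2 : ℝ≥0) : ℝ)) = - (2 * Real.log n) := by
      have h2 : (((‖C - (-C)‖₊ / 2) ^ 2 : ℝ≥0) : ℝ) = C ^ 2 := by
        push_cast
        rw [Real.norm_eq_abs, div_pow, sq_abs]; ring
      rw [h2, mul_pow, Real.sq_sqrt (by positivity)]
      simp
      field_simp
      try ring
    rw [NNReal.coe_sum, hexp] at this
    have h3 : Real.exp (-(2 * Real.log n)) = 1 / (n:ℝ)^2 := by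
      rw [Real.exp_neg, mul_comm, Real.exp_mul, Real.exp_log hn']
      norm_cast
      simp
    rw [h3] at this
    rw [if_neg hn.ne', add_zero]
    rw [← ENNReal.ofReal_toReal (measure_ne_top μ _)]
    exact ENNReal.ofReal_le_ofReal this
  have hs : ∑' n : ℕ, μ {h | 2 * C * √(n * Real.log n) ≤ ∑ i : Fin n, (f (h i) - ∫ x, f x ∂ν)}
      ≠ ⊤ := by
    refine ne_top_of_le_ne_top ?_ (ENNReal.tsum_le_tsum key)
    rw [ENNReal.tsum_add, tsum_ite_eq]
    refine ENNReal.add_ne_top.mpr ⟨?_, by simp⟩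
    exact ((Real.summable_one_div_nat_pow (p := 2)).mpr (by norm_num)).tsum_ofReal_ne_top
  filter_upwards [ae_eventually_notMem hs] with h hh
  filter_upwards [hh] with n hn
  simpa using hn

lemma log_rate (C γ : ℝ) (hγ : γ < 1 / 2) :
    Tendsto (fun n : ℕ => (n : ℝ) ^ γ * ((1 / n) * (2 * C * √(n * Real.log n)))) atTop (𝓝 0) := by
  have h1 : Tendsto (fun x : ℝ => Real.log x / x ^ (1 - 2 * γ)) atTop (𝓝 0) :=
    (isLittleO_log_rpow_atTop (by linarith)).tendsto_div_nhds_zero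
  have h2 : Tendsto (fun x : ℝ => 2 * C * √(Real.log x / x ^ (1 - 2 * γ))) atTop (𝓝 0) := by
    have := (h1.sqrt).const_mul (2 * C)
    simpa using this
  refine (h2.comp tendsto_natCast_atTop_atTop).congr' ?_
  filter_upwards [eventually_ge_atTop 1] with n hn
  have hn' : (0:ℝ) < n := by exact_mod_cast hn
  have hl : 0 ≤ Real.log n := Real.log_natCast_nonneg n
  simp only [Function.comp]
  have h3 : Real.log n / (n:ℝ) ^ (1 - 2 * γ) = ((n:ℝ) ^ γ * (1 / n)) ^ 2 * (n * Real.log n) := by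
    rw [Real.rpow_sub hn', Real.rpow_one, mul_comm 2 γ, Real.rpow_mul hn'.le]
    have := Real.rpow_pos_of_pos hn' γ
    norm_cast
    field_simp
  rw [h3, Real.sqrt_mul (by positivity), Real.sqrt_sq (by positivity)]
  ring

lemma avg_rate {ν : Measure ℝ} [IsProbabilityMeasure ν] {μ : Measure (ℕ → ℝ)}
    [IsProbabilityMeasure μ] (hμ : IsProductMeasure ν μ) (f : ℝ → ℝ) (hf : Measurable f)
    (C : ℝ) (hfC : ∀ x, |f x| ≤ C) :
    ∀ᵐ h ∂μ, ∀ γ : ℝ, γ < 1 / 2 → Tendsto (fun n : ℕ =>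
      (n : ℝ) ^ γ * ((1 / n) * ∑ i : Fin n, f (h i) - ∫ x, f x ∂ν)) atTop (𝓝 0) := by
  have hC : 0 < C + 1 := by have := (abs_nonneg _).trans (hfC 0); linarith
  filter_upwards [one_sided hμ f hf (C + 1) hC (fun x => (hfC x).trans (by linarith)),
    one_sided hμ (fun x => - f x) hf.neg (C + 1) hC
      (fun x => by rw [abs_neg]; exact (hfC x).trans (by linarith))] with h h1 h2 γ hγ
  refine squeeze_zero_norm' ?_ (log_rate (C + 1) γ hγ)
  filter_upwards [h1, h2, eventually_ge_atTop 1] with n h1 h2 hn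
  have hn' : (0:ℝ) < n := by exact_mod_cast hn
  have he : (1 / (n:ℝ)) * ∑ i : Fin n, f (h i) - ∫ x, f x ∂ν
      = (1 / n) * ∑ i : Fin n, (f (h i) - ∫ x, f x ∂ν) := by
    rw [Finset.sum_sub_distrib]
    simp
    field_simp
  rw [he, norm_mul, Real.norm_of_nonneg (by positivity), norm_mul,
    Real.norm_of_nonneg (by positivity)]
  gcongr
  rw [Real.norm_eq_abs, abs_le]
  rw [integral_neg] at h2
  have h4 : ∑ i : Fin n, (-f (h i) - -∫ x, f x ∂ν) = - ∑ i : Fin n, (f (h i) - ∫ x, f x ∂ν) := by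
    rw [← Finset.sum_neg_distrib]; congr 1; funext i; ring
  constructor <;> linarith

/-- Abstract Taylor bound for a chain of derivatives. -/
lemma taylor_chain (N : ℕ) : ∀ (F : ℕ → ℝ → ℝ) (_ : ∀ i x, HasDerivAt (F i) (F (i + 1) x) x)
    (C : ℝ) (_ : ∀ x, |F N x| ≤ C) (m u : ℝ),
    |F 0 (m + u) - ∑ i ∈ Finset.range N, F i m / (i.factorial : ℝ) * u ^ i| ≤ C * |u| ^ N := by
  induction N with
  | zero => intro F _ C hC m u; simpa using hC _
  | succ N ih =>
    intro F hF C hC m u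
    have hC0 : 0 ≤ C := (abs_nonneg _).trans (hC 0)
    have ih' := ih (fun i => F (i + 1)) (fun i x => hF (i + 1) x) C hC m
    let R : ℝ → ℝ := fun u =>
      F 0 (m + u) - ∑ i ∈ Finset.range (N + 1), F i m / (i.factorial : ℝ) * u ^ i
    have hR : ∀ v, HasDerivAt R
        (F 1 (m + v) - ∑ i ∈ Finset.range N, F (i + 1) m / (i.factorial : ℝ) * v ^ i) v := by
      intro v
      have h1 : HasDerivAt (fun u => F 0 (m + u)) (F 1 (m + v)) v :=
        (hF 0 (m + v)).comp_const_add m v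
      have h2 : HasDerivAt
          (fun u => ∑ i ∈ Finset.range (N + 1), F i m / (i.factorial : ℝ) * u ^ i)
          (∑ i ∈ Finset.range (N + 1), F i m / (i.factorial : ℝ) * (i * v ^ (i - 1))) v :=
        HasDerivAt.fun_sum fun i _ => (hasDerivAt_pow i v).const_mul _
      refine (h1.sub h2).congr_deriv ?_
      congr 1
      rw [Finset.sum_range_succ']
      simp only [Nat.cast_zero, zero_mul, mul_zero, add_zero, Nat.add_sub_cancel]
      refine Finset.sum_congr rfl fun i _ => ?_
      rw [Nat.factorial_succ]
      have : (i.factorial : ℝ) ≠ 0 := by positivity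
      push_cast
      field_simp
    have hmv := Convex.norm_image_sub_le_of_norm_hasDerivWithin_le (f := R)
      (s := Set.Icc (-|u|) |u|) (C := C * |u| ^ N) (x := 0) (y := u)
      (fun x _ => (hR x).hasDerivWithinAt)
      (fun x hx => by
        refine (ih' x).trans ?_
        have : |x| ≤ |u| := abs_le.mpr hx
        gcongr)
      (convex_Icc _ _) (by simp) ⟨neg_abs_le u, le_abs_self u⟩
    have hR0 : R 0 = 0 := by
      simp only [R]
      rw [Finset.sum_range_succ']
      simp
    rw [hR0] at hmv
    simp only [sub_zero, Real.norm_eq_abs] at hmv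
    rw [pow_succ, ← mul_assoc]
    exact hmv

lemma real_hasDerivAt_tanh (x : ℝ) : HasDerivAt Real.tanh (1 - Real.tanh x ^ 2) x := by
  have h : Real.tanh = fun x => Real.sinh x / Real.cosh x := by
    funext x; exact Real.tanh_eq_sinh_div_cosh x
  have hc := (Real.cosh_pos x).ne'
  rw [h]
  refine ((Real.hasDerivAt_sinh x).div (Real.hasDerivAt_cosh x) hc).congr_deriv ?_
  field_simp

lemma real_abs_tanh_le (x : ℝ) : |Real.tanh x| ≤ 1 := by
  rw [Real.tanh_eq_sinh_div_cosh, abs_div, div_le_one (by positivity [Real.cosh_pos x])]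
  exact sq_le_sq.mp (by nlinarith [Real.cosh_sq x])

/-- Polynomials describing the derivatives of `log cosh (β y)`; index shifted by one. -/
def dpoly (β : ℝ) : ℕ → Polynomial ℝ
  | 0 => Polynomial.C β * Polynomial.X
  | (i + 1) => Polynomial.C β * (1 - Polynomial.X ^ 2) * Polynomial.derivative (dpoly β i)

/-- The iterated derivatives of `log cosh (β y)`. -/
def dphi (β : ℝ) : ℕ → ℝ → ℝ
  | 0 => fun y => Real.log (Real.cosh (β * y))
  | (i + 1) => fun y => (dpoly β i).eval (Real.tanh (β * y))

lemma dphi_deriv (β : ℝ) (i : ℕ) (y : ℝ) : HasDerivAt (dphi β i) (dphi β (i + 1) y) y := by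
  have hl : HasDerivAt (fun y => β * y) β y := by simpa using (hasDerivAt_id y).const_mul β
  cases i with
  | zero =>
    have h := ((Real.hasDerivAt_cosh (β * y)).comp y hl).log (Real.cosh_pos _).ne'
    refine h.congr_deriv ?_
    simp [dphi, dpoly, Real.tanh_eq_sinh_div_cosh]
    ring
  | succ i =>
    have h := ((dpoly β i).hasDerivAt (Real.tanh (β * y))).comp y
      ((real_hasDerivAt_tanh (β * y)).comp y hl)
    refine h.congr_deriv ?_
    simp [dphi, dpoly]
    ring

lemma dphi_bdd (β : ℝ) (i : ℕ) : ∃ C, ∀ y, |dphi β (i + 1) y| ≤ C := by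
  obtain ⟨C, hC⟩ := (isCompact_Icc (a := (-1:ℝ)) (b := 1)).exists_bound_of_continuousOn
    (f := fun x => (dpoly β i).eval x) (dpoly β i).continuous.continuousOn
  exact ⟨C, fun y => hC _ (abs_le.mp (real_abs_tanh_le _))⟩

lemma dphi_cont (β : ℝ) (i : ℕ) : Continuous (dphi β i) :=
  continuous_iff_continuousAt.mpr fun y => (dphi_deriv β i y).continuousAt

lemma dphi_zero_le (β : ℝ) : ∃ C, ∀ y, |dphi β 0 y| ≤ C * |y| := by
  obtain ⟨C, hC⟩ := dphi_bdd β 0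
  refine ⟨C, fun y => ?_⟩
  have := taylor_chain 1 (dphi β) (dphi_deriv β) C hC 0 y
  simpa [dphi] using this

/-- derivatives of the quadratic part -/
def dquad (β : ℝ) : ℕ → ℝ → ℝ
  | 0 => fun x => β / 2 * x ^ 2
  | 1 => fun x => β * x
  | 2 => fun _ => β
  | (_ + 3) => fun _ => 0

lemma dquad_deriv (β : ℝ) (i : ℕ) (y : ℝ) : HasDerivAt (dquad β i) (dquad β (i + 1) y) y := by
  match i with
  | 0 => exact ((hasDerivAt_pow 2 y).const_mul (β / 2)).congr_deriv (by simp [dquad]; ring)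
  | 1 => exact ((hasDerivAt_id y).const_mul β).congr_deriv (by simp [dquad])
  | 2 => exact hasDerivAt_const _ _
  | (_ + 3) => exact hasDerivAt_const _ _

/-- derivatives of `G` -/
def dG (β : ℝ) (ν : Measure ℝ) (i : ℕ) (x : ℝ) : ℝ := dquad β i x - ∫ h, dphi β i (x + h) ∂ν

/-- derivatives of `Gn` -/
def dGn (β : ℝ) (h : ℕ → ℝ) (n : ℕ) (i : ℕ) (x : ℝ) : ℝ :=
  dquad β i x - (1 / n) * ∑ j : Fin n, dphi β i (x + h j)

lemma dGn_deriv (β : ℝ) (h : ℕ → ℝ) (n : ℕ) (i : ℕ) (x : ℝ) :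
    HasDerivAt (dGn β h n i) (dGn β h n (i + 1) x) x :=
  (dquad_deriv β i x).sub ((HasDerivAt.fun_sum fun (j : Fin n) _ =>
    (dphi_deriv β i (x + h j)).comp_add_const x (h j)).const_mul _)

lemma dphi_int (β : ℝ) (ν : Measure ℝ) [IsProbabilityMeasure ν]
    (hmom : Integrable (fun x : ℝ => x ^ 2) ν) (i : ℕ) (x : ℝ) :
    Integrable (fun h => dphi β i (x + h)) ν := by
  have hc : Continuous (fun h => dphi β i (x + h)) :=
    (dphi_cont β i).comp (by fun_prop)
  cases i with
  | zero =>
    obtain ⟨C, hC⟩ := dphi_zero_le β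
    have hC0 : 0 ≤ C := by have := (abs_nonneg _).trans (hC 1); simpa using this
    refine Integrable.mono' (g := fun h => C * (|x| + 1 + h ^ 2)) ?_ hc.aestronglyMeasurable ?_
    · exact ((integrable_const _).add hmom).const_mul C
    · refine ae_of_all _ fun h => (hC _).trans ?_
      gcongr
      have h1 := abs_add_le x h
      have h2 : |h| ≤ 1 + h ^ 2 := by nlinarith [sq_abs h, sq_nonneg (|h| - 1), sq_nonneg h]
      linarith
  | succ i =>
    obtain ⟨C, hC⟩ := dphi_bdd β i
    exact Integrable.of_bound hc.aestronglyMeasurable C (ae_of_all _ fun h => hC _)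

lemma dG_deriv (β : ℝ) (ν : Measure ℝ) [IsProbabilityMeasure ν]
    (hmom : Integrable (fun x : ℝ => x ^ 2) ν) (i : ℕ) (x : ℝ) :
    HasDerivAt (dG β ν i) (dG β ν (i + 1) x) x := by
  refine (dquad_deriv β i x).sub ?_
  obtain ⟨C, hC⟩ := dphi_bdd β i
  refine (hasDerivAt_integral_of_dominated_loc_of_deriv_le (bound := fun _ => C)
    (F := fun x h => dphi β i (x + h)) (F' := fun x h => dphi β (i + 1) (x + h)) univ_mem
    (Eventually.of_forall fun y => (dphi_int β ν hmom i y).aestronglyMeasurable)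
    (dphi_int β ν hmom i x) (dphi_int β ν hmom (i + 1) x).aestronglyMeasurable
    (ae_of_all _ fun h y _ => hC _) (integrable_const _)
    (ae_of_all _ fun h y _ => (dphi_deriv β i (y + h)).comp_add_const y h)).2

lemma iteratedDeriv_G (β : ℝ) (ν : Measure ℝ) [IsProbabilityMeasure ν]
    (hmom : Integrable (fun x : ℝ => x ^ 2) ν) (i : ℕ) :
    iteratedDeriv i (G β ν) = dG β ν i := by
  induction i with
  | zero => rw [iteratedDeriv_zero]; rfl
  | succ i ih =>
    rw [iteratedDeriv_succ, ih]
    funext x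
    exact (dG_deriv β ν hmom i x).deriv

lemma dGn_bdd (β : ℝ) (k : ℕ) (hk : 1 ≤ k) :
    ∃ C, 0 ≤ C ∧ ∀ h n x, |dGn β h n (2 * k + 1) x| ≤ C := by
  obtain ⟨C, hC⟩ := dphi_bdd β (2 * k)
  have hC0 : 0 ≤ C := (abs_nonneg _).trans (hC 0)
  refine ⟨C, hC0, fun h n x => ?_⟩
  obtain ⟨j, rfl⟩ : ∃ j, k = j + 1 := ⟨k - 1, by omega⟩
  have hq : dquad β (2 * (j + 1) + 1) x = 0 := rfl
  rw [dGn, hq, zero_sub, abs_neg, abs_mul]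
  rcases Nat.eq_zero_or_pos n with hn | hn
  · subst hn; simpa using hC0
  have hn' : (0:ℝ) < n := by exact_mod_cast hn
  have h1 : |∑ i : Fin n, dphi β (2 * (j + 1) + 1) (x + h i)| ≤ n * C := by
    refine (Finset.abs_sum_le_sum_abs _ _).trans ?_
    refine (Finset.sum_le_sum fun i _ => hC _).trans ?_
    simp
  rw [abs_of_nonneg (by positivity)]
  calc 1 / (n:ℝ) * _ ≤ 1 / n * (n * C) := by gcongr
    _ = C := by field_simp

/-- Deterministic final estimate. -/
lemma final_est (F : ℕ → ℝ → ℝ) (hF : ∀ i x, HasDerivAt (F i) (F (i + 1) x) x)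
    (k : ℕ) (hk : 1 ≤ k) (C l m : ℝ) (hC0 : 0 ≤ C) (hl : 0 < l)
    (hC : ∀ x, |F (2 * k + 1) x| ≤ C) (a : ℝ) (ha : 1 ≤ a)
    (hsmall : ∀ i ∈ Finset.Icc 1 (2 * k - 1), a ^ (2 * k - 1) * |F i m| ≤ 1)
    (hbig : 3 * l / 4 ≤ F (2 * k) m) (s : ℝ)
    (hs : |s| ≤ l / (4 * (C + 1) * (2 * k).factorial) * a) :
    P2k l k s ≤ a ^ (2 * k) * (F 0 (m + s * a⁻¹) - F 0 m) := by
  have ha0 : 0 < a := by linarith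
  have hT := taylor_chain (2 * k + 1) F hF C hC m (s * a⁻¹)
  have hfac : (0:ℝ) < (2 * k).factorial := by positivity
  have hsplit : ∑ i ∈ Finset.range (2 * k + 1), F i m / (i.factorial : ℝ) * (s * a⁻¹) ^ i
      = F 0 m + ∑ i ∈ Finset.Icc 1 (2 * k - 1), F i m / (i.factorial : ℝ) * (s * a⁻¹) ^ i
        + F (2 * k) m / ((2 * k).factorial : ℝ) * (s * a⁻¹) ^ (2 * k) := by
    rw [Finset.sum_range_succ, Finset.range_eq_Ico, Finset.sum_eq_sum_Ico_succ_bot (by omega)]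
    have : Finset.Ico (0 + 1) (2 * k) = Finset.Icc 1 (2 * k - 1) := by
      ext i; simp only [Finset.mem_Ico, Finset.mem_Icc]; omega
    rw [this]
    simp
  rw [hsplit] at hT
  have hT' := (abs_le.mp hT).1
  have hterm : ∀ i ∈ Finset.Icc 1 (2 * k - 1),
      -|s| ^ i ≤ a ^ (2 * k) * (F i m / (i.factorial : ℝ) * (s * a⁻¹) ^ i) := by
    intro i hi
    have h1 := hsmall i hi
    rw [Finset.mem_Icc] at hi
    refine neg_le_of_abs_le ?_
    have e : a ^ (2 * k) = a ^ (2 * k - i) * a ^ i := by rw [← pow_add]; congr 1; omega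
    have e2 : a ^ (2 * k) * (F i m / (i.factorial : ℝ) * (s * a⁻¹) ^ i)
        = (a ^ (2 * k - i) * F i m) / (i.factorial : ℝ) * s ^ i := by
      rw [e, mul_pow, inv_pow]
      field_simp
    rw [e2, abs_mul, abs_div, abs_mul, abs_pow, abs_pow, abs_of_pos ha0, Nat.abs_cast]
    have h2 : a ^ (2 * k - i) * |F i m| ≤ 1 := by
      refine le_trans ?_ h1
      gcongr
      · exact hi.1
    have h3 : (1:ℝ) ≤ i.factorial := by exact_mod_cast Nat.succ_le_of_lt i.factorial_pos
    have h4 : a ^ (2 * k - i) * |F i m| / (i.factorial : ℝ) ≤ 1 := by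
      rw [div_le_one (by positivity)]; linarith
    calc _ ≤ 1 * |s| ^ i := by gcongr
      _ = _ := one_mul _
  have hsum := Finset.sum_le_sum hterm
  rw [Finset.sum_neg_distrib, ← Finset.mul_sum] at hsum
  have hsk : 0 ≤ s ^ (2 * k) := (even_two_mul k).pow_nonneg s
  have htop : a ^ (2 * k) * (F (2 * k) m / ((2 * k).factorial : ℝ) * (s * a⁻¹) ^ (2 * k))
      = F (2 * k) m / ((2 * k).factorial : ℝ) * s ^ (2 * k) := by
    rw [mul_pow, inv_pow]; field_simp
  have htop2 : 3 * l / 4 / ((2 * k).factorial : ℝ) * s ^ (2 * k) ≤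
      F (2 * k) m / ((2 * k).factorial : ℝ) * s ^ (2 * k) := by gcongr
  have hrem : a ^ (2 * k) * (C * |s * a⁻¹| ^ (2 * k + 1))
      ≤ l / 4 / ((2 * k).factorial : ℝ) * s ^ (2 * k) := by
    have e : a ^ (2 * k) * (C * |s * a⁻¹| ^ (2 * k + 1)) = C * (|s| * a⁻¹) * s ^ (2 * k) := by
      rw [pow_succ, (even_two_mul k).pow_abs, abs_mul, abs_of_pos (inv_pos.mpr ha0), mul_pow,
        inv_pow]
      field_simp
    rw [e]
    gcongr
    have h1 : |s| * a⁻¹ ≤ l / (4 * (C + 1) * (2 * k).factorial) := by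
      rw [← div_eq_mul_inv, div_le_iff₀ ha0]; exact hs
    calc C * (|s| * a⁻¹) ≤ (C + 1) * (l / (4 * (C + 1) * (2 * k).factorial)) := by
          gcongr; linarith
      _ = _ := by field_simp
  have hmul := mul_le_mul_of_nonneg_left hT' (pow_nonneg ha0.le (2 * k))
  have e5 : 3 * l / 4 / ((2 * k).factorial : ℝ) * s ^ (2 * k)
      - l / 4 / ((2 * k).factorial : ℝ) * s ^ (2 * k)
      = l / (2 * ((2 * k).factorial : ℝ)) * s ^ (2 * k) := by field_simp; ring
  rw [P2k]
  simp only [mul_sub, mul_add, mul_neg] at hmul htop hsum hrem ⊢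
  linarith

/-- Polynomial lower bound on the rescaled increments of `G_n^h`
(Lemma 5.4 (ii) of the paper). -/
theorem rescaled_increments_lower_bound
    (β : ℝ) (hβ : 0 < β) (ν : Measure ℝ) [IsProbabilityMeasure ν]
    (hmom : Integrable (fun x : ℝ => x ^ 2) ν)
    (μ : Measure (ℕ → ℝ)) [IsProbabilityMeasure μ] (hμ : IsProductMeasure ν μ)
    (m : ℝ) (k : ℕ) (l : ℝ) (hmin : IsMinOfType β ν m k l) :
    ∀ᵐ h ∂μ, ∀ α : ℝ, 1 - 1 / (2 * (2 * (k : ℝ) - 1)) < α → α < 1 →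
      ∃ δ > (0 : ℝ), ∀ᶠ n : ℕ in atTop, ∀ s : ℝ,
        s ∈ Set.Icc (-(δ * (n : ℝ) ^ (1 - α))) (δ * (n : ℝ) ^ (1 - α)) →
          P2k l k s ≤ (n : ℝ) ^ (2 * (k : ℝ) * (1 - α)) *
            (Gn β h n (m + s * (n : ℝ) ^ (α - 1)) - Gn β h n m) := by
  obtain ⟨hk, hl, hzero, htop⟩ := hmin
  have hrate : ∀ᵐ h ∂μ, ∀ i : ℕ, ∀ γ : ℝ, γ < 1 / 2 → Tendsto (fun n : ℕ =>
      (n : ℝ) ^ γ * ((1 / n) * ∑ j : Fin n, dphi β (i + 1) (m + h j)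
        - ∫ x, dphi β (i + 1) (m + x) ∂ν)) atTop (𝓝 0) := by
    rw [ae_all_iff]
    intro i
    obtain ⟨C, hC⟩ := dphi_bdd β i
    exact avg_rate hμ (fun x => dphi β (i + 1) (m + x))
      ((dphi_cont β (i + 1)).comp (by fun_prop)).measurable C (fun x => hC _)
  obtain ⟨C, hC0, hC⟩ := dGn_bdd β k hk
  have hk' : (1:ℝ) ≤ k := by exact_mod_cast hk
  filter_upwards [hrate] with h hh α hα1 hα2
  have hrate' : ∀ i : ℕ, 1 ≤ i → ∀ γ : ℝ, γ < 1 / 2 → Tendsto (fun n : ℕ =>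
      (n : ℝ) ^ γ * (dG β ν i m - dGn β h n i m)) atTop (𝓝 0) := by
    intro i hi γ hγ
    obtain ⟨j, rfl⟩ : ∃ j, i = j + 1 := ⟨i - 1, by omega⟩
    refine (hh j γ hγ).congr fun n => ?_
    simp only [dG, dGn]
    ring
  have hγ : (1 - α) * (2 * k - 1) < 1 / 2 := by
    have h1 : 1 - α < 1 / (2 * (2 * (k : ℝ) - 1)) := by linarith
    rw [lt_div_iff₀ (by linarith)] at h1
    linarith
  refine ⟨l / (4 * (C + 1) * (2 * k).factorial), by positivity, ?_⟩
  have hev1 : ∀ᶠ n : ℕ in atTop, ∀ i ∈ Finset.Icc 1 (2 * k - 1),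
      |(n : ℝ) ^ ((1 - α) * (2 * k - 1)) * (dG β ν i m - dGn β h n i m)| < 1 := by
    rw [eventually_all_finset]
    intro i hi
    rw [Finset.mem_Icc] at hi
    have := (hrate' i hi.1 _ hγ).abs
    rw [abs_zero] at this
    exact this.eventually_lt_const one_pos
  have hev2 : ∀ᶠ n : ℕ in atTop,
      (n : ℝ) ^ (0 : ℝ) * (dG β ν (2 * k) m - dGn β h n (2 * k) m) < l / 4 :=
    (hrate' (2 * k) (by omega) 0 (by norm_num)).eventually_lt_const (by positivity)
  filter_upwards [hev1, hev2, eventually_ge_atTop 1] with n h1 h2 hn s hs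
  have hn1 : (1:ℝ) ≤ n := by exact_mod_cast hn
  have hn0 : (0:ℝ) < n := by linarith
  rw [Real.rpow_zero, one_mul, ← iteratedDeriv_G β ν hmom, htop] at h2
  have hpow : ∀ j : ℕ, ((n:ℝ) ^ (1 - α)) ^ j = (n:ℝ) ^ ((1 - α) * j) := fun j => by
    rw [Real.rpow_mul hn0.le, Real.rpow_natCast]
  have hfin := final_est (dGn β h n) (dGn_deriv β h n) k hk C l m hC0 hl (hC h n)
    ((n:ℝ) ^ (1 - α)) (Real.one_le_rpow hn1 (by linarith)) (fun i hi => by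
      have h3 := h1 i hi
      rw [Finset.mem_Icc] at hi
      rw [← iteratedDeriv_G β ν hmom, hzero i hi.1 hi.2, zero_sub, abs_mul, abs_neg,
        abs_of_nonneg (by positivity)] at h3
      rw [hpow, Nat.cast_sub (by omega)]
      push_cast
      exact h3.le) (by linarith) s (abs_le.mpr hs)
  have e1 : (n:ℝ) ^ (2 * (k:ℝ) * (1 - α)) = ((n:ℝ) ^ (1 - α)) ^ (2 * k) := by
    rw [hpow]; congr 1; push_cast; ring
  have e2 : (n:ℝ) ^ (α - 1) = ((n:ℝ) ^ (1 - α))⁻¹ := by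
    rw [← Real.rpow_neg hn0.le]; congr 1; ring
  rw [e1, e2]
  exact hfin
end
end
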